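/- arXiv:2602.05593 — 2 statements merged into one kernel-verified Lean document; each statement's English description precedes it below -/
import Mathlib

section
/- Let t = Σ_{n=1}^∞ 1/(10↑↑(3n)) and let X_t be the topological support of the self-similar measure μ_t. There exist a monotonically decreasing sequence of positive reals ψ(1), ψ(2), … and a real γ ∈ (0,1) such that: (1) limsup_{N → ∞} (log Ψ(N)) / (log N) = 1, where Ψ(N) = Σ_{n=1}^N ψ(n) (so in particular Ψ(N) → ∞); and (2) for all x ∈ X_t and all N ∈ ℕ, the set {n : 1 ≤ n ≤ N and dist(10^{n−1} x − γ, ℤ) ≤ ψ(n)} is empty, i.e. for every n ≥ 1 and every integer m, |10^{n−1} x − γ − m| > ψ(n). -/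
open MeasureTheory Filter Set
open scoped ENNReal NNReal

/-- Knuth's up-arrow tower: `tow n = 10↑↑n`, with `tow 0 = 1` so that `tow 1 = 10`. -/
def tow : ℕ → ℕ
  | 0 => 1
  | n + 1 => 10 ^ tow n

/-- `μ_t` is invariant for the IFS `{x/10, (x+1)/10, (x+t)/10}` with weights `(1/3,1/3,1/3)`. -/
def muInv (t : ℝ) (μ : Measure ℝ) : Prop :=
  μ = (3 : ℝ≥0∞)⁻¹ • (Measure.map (fun x : ℝ => x / 10) μ +
    Measure.map (fun x : ℝ => (x + 1) / 10) μ + Measure.map (fun x : ℝ => (x + t) / 10) μ)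

/-- The topological support of a measure on `ℝ`. -/
def msupport (μ : Measure ℝ) : Set ℝ := {x | ∀ ε > 0, 0 < μ (Metric.ball x ε)}

/-!
Modulo 1 and up to `O(b ^ (-s u))`, a point `b ^ L * x` with `x` in the support is the sum of
`∑ j < L, b ^ j * d (w j)`, for some word `w`, and a base-`b` fraction with `s u` digits among the
`d i`. When every `d i` is extremely close to a rational with denominator `b ^ u`, the terms with
`u ≤ j` contribute almost nothing modulo 1, so for a huge range of `L` these points are covered by
about `card ι ^ ((1 + s) u)` arcs of length comparable to `b ^ (-s u)`. If `card ι < b` and `s` is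
large, the total length is summable in `u`, and by Borel–Cantelli almost every `γ` avoids the covers
for all large `u`. Since `u` is only logarithmic in the largest admissible `L`, the resulting
rate `ψ n` exceeds `n ^ (-ε)` infinitely often.
-/

open scoped Topology

section PartialSums

variable {ψ : ℕ → ℝ}

lemma natCast_mul_le_sum_Icc (hψ : Antitone ψ) (N : ℕ) :
    N * ψ N ≤ ∑ n ∈ Finset.Icc 1 N, ψ n := by
  simpa using Finset.card_nsmul_le_sum (Finset.Icc 1 N) ψ (ψ N)
    fun n hn => hψ (Finset.mem_Icc.1 hn).2

lemma sum_Icc_le_natCast (hψ : ∀ n, ψ n ≤ 1) (N : ℕ) : ∑ n ∈ Finset.Icc 1 N, ψ n ≤ N := by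
  simpa using Finset.sum_le_card_nsmul (Finset.Icc 1 N) ψ 1 fun n _ => hψ n

lemma frequently_rpow_le_sum_Icc (hψ : Antitone ψ)
    (hlow : ∀ ε : ℝ, 0 < ε → ∃ᶠ N : ℕ in atTop, (N : ℝ) ^ (-ε) ≤ ψ N) {c : ℝ} (hc : c < 1) :
    ∃ᶠ N : ℕ in atTop, (N : ℝ) ^ c ≤ ∑ n ∈ Finset.Icc 1 N, ψ n := by
  refine ((hlow (1 - c) (sub_pos.2 hc)).and_eventually (eventually_gt_atTop 0)).mono ?_
  rintro N ⟨hN, hN0⟩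
  have hN0' : (0 : ℝ) < N := Nat.cast_pos.2 hN0
  calc (N : ℝ) ^ c = N * (N : ℝ) ^ (-(1 - c)) := by
        simpa using Real.rpow_add hN0' 1 (-(1 - c))
    _ ≤ N * ψ N := by gcongr
    _ ≤ ∑ n ∈ Finset.Icc 1 N, ψ n := natCast_mul_le_sum_Icc hψ N

theorem tendsto_sum_Icc_atTop (hpos : ∀ n, 0 < ψ n) (hψ : Antitone ψ)
    (hlow : ∀ ε : ℝ, 0 < ε → ∃ᶠ N : ℕ in atTop, (N : ℝ) ^ (-ε) ≤ ψ N) :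
    Tendsto (fun N : ℕ => ∑ n ∈ Finset.Icc 1 N, ψ n) atTop atTop := by
  have hmono : Monotone fun N : ℕ => ∑ n ∈ Finset.Icc 1 N, ψ n := fun M N hMN =>
    Finset.sum_le_sum_of_subset_of_nonneg (Finset.Icc_subset_Icc_right hMN)
      fun n _ _ => (hpos n).le
  refine tendsto_atTop_atTop_of_monotone hmono fun B => ?_
  have hsqrt : ∀ᶠ N : ℕ in atTop, B ≤ (N : ℝ) ^ (1 / 2 : ℝ) :=
    ((tendsto_rpow_atTop one_half_pos).comp tendsto_natCast_atTop_atTop).eventually_ge_atTop B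
  obtain ⟨N, hN, hB⟩ :=
    ((frequently_rpow_le_sum_Icc hψ hlow one_half_lt_one).and_eventually hsqrt).exists
  exact ⟨N, hB.trans hN⟩

theorem limsup_log_sum_Icc_div_log_eq_one (hpos : ∀ n, 0 < ψ n) (hle : ∀ n, ψ n ≤ 1)
    (hψ : Antitone ψ) (hlow : ∀ ε : ℝ, 0 < ε → ∃ᶠ N : ℕ in atTop, (N : ℝ) ^ (-ε) ≤ ψ N) :
    limsup (fun N : ℕ => Real.log (∑ n ∈ Finset.Icc 1 N, ψ n) / Real.log N) atTop = 1 := by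
  set ratio : ℕ → ℝ := fun N => Real.log (∑ n ∈ Finset.Icc 1 N, ψ n) / Real.log N
  have hlog : ∀ᶠ N : ℕ in atTop, 0 < Real.log N := by
    filter_upwards [eventually_gt_atTop 1] with N hN using Real.log_pos (Nat.one_lt_cast.2 hN)
  have hupper : ∀ᶠ N in atTop, ratio N ≤ 1 := by
    filter_upwards [hlog, eventually_gt_atTop 0] with N hN hN0
    rw [div_le_one hN]
    exact Real.log_le_log (Finset.sum_pos (fun n _ => hpos n) (Finset.nonempty_Icc.2 hN0))
      (sum_Icc_le_natCast hle N)
  have hlower : ∀ c < 1, ∃ᶠ N in atTop, c ≤ ratio N := fun c hc => by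
    refine ((frequently_rpow_le_sum_Icc hψ hlow hc).and_eventually
      (hlog.and (eventually_gt_atTop 0))).mono ?_
    rintro N ⟨hN, hlogN, hN0⟩
    have hN0' : (0 : ℝ) < N := Nat.cast_pos.2 hN0
    rw [le_div_iff₀ hlogN, ← Real.log_rpow hN0']
    exact Real.log_le_log (by positivity) hN
  refine le_antisymm
    (limsup_le_of_le (IsCoboundedUnder.of_frequently_ge (hlower 0 zero_lt_one)) hupper)
    (le_of_forall_lt_imp_le_of_dense fun c hc => ?_)
  exact le_limsup_of_frequently_le (hlower c hc) (isBoundedUnder_of_eventually_le hupper)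

end PartialSums

section SelfSimilar

variable {ι : Type*} [Fintype ι] {b : ℝ} {d : ι → ℝ} {p : ι → ℝ≥0∞} {μ : Measure ℝ}

/-- `μ` is a self-similar measure for the homogeneous iterated function system
`x ↦ (x + d i) / b` with probability vector `p`. -/
structure IsSelfSimilar (b : ℝ) (d : ι → ℝ) (p : ι → ℝ≥0∞) (μ : Measure ℝ) : Prop where
  sum_weights : ∑ i, p i = 1
  eq_sum_map : μ = ∑ i, p i • μ.map fun x => (x + d i) / b

lemma isSelfSimilar_of_muInv {t : ℝ} (hμ : muInv t μ) :
    IsSelfSimilar 10 ![0, 1, t] (fun _ => 3⁻¹) μ where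
  sum_weights := by simp [ENNReal.mul_inv_cancel]
  eq_sum_map := by
    simpa [muInv, Fin.sum_univ_three, smul_add] using hμ

lemma msupport_eq_support (μ : Measure ℝ) : msupport μ = μ.support :=
  Set.ext fun _ => Metric.nhds_basis_ball.mem_measureSupport.symm

namespace IsSelfSimilar

lemma measure_apply (hμ : IsSelfSimilar b d p μ) {s : Set ℝ} (hs : MeasurableSet s) :
    μ s = ∑ i, p i * μ ((fun x => (x + d i) / b) ⁻¹' s) := by
  conv_lhs => rw [hμ.eq_sum_map]
  simp only [Measure.coe_finsetSum, Finset.sum_apply, Measure.smul_apply, smul_eq_mul]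
  refine Finset.sum_congr rfl fun i _ => ?_
  rw [Measure.map_apply (by fun_prop) hs]

lemma exists_mul_sub_mem_support (hμ : IsSelfSimilar b d p μ) (hb : b ≠ 0) {x : ℝ}
    (hx : x ∈ μ.support) : ∃ i, b * x - d i ∈ μ.support := by
  by_contra! hnull
  simp only [Measure.notMem_support_iff_exists] at hnull
  choose U hU hμU using hnull
  have hnhds : ∀ᶠ y in 𝓝 x, ∀ i, b * y - d i ∈ U i :=
    eventually_all.2 fun i => (by fun_prop : Continuous fun y => b * y - d i).continuousAt (hU i)
  obtain ⟨V, hVU, hVopen, hxV⟩ := eventually_nhds_iff.1 hnhds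
  have hpre (i : ι) : (fun y => (y + d i) / b) ⁻¹' V ⊆ U i := fun y hy => by
    simpa [mul_div_cancel₀ _ hb] using hVU _ hy i
  have hμV : μ V = 0 := by
    simp [hμ.measure_apply hVopen.measurableSet, fun i => measure_mono_null (hpre i) (hμU i)]
  exact Measure.notMem_support_iff_exists.2 ⟨V, hVopen.mem_nhds hxV, hμV⟩ hx

lemma measure_lt_abs_le (hμ : IsSelfSimilar b d p μ) (hb : 0 < b) {ρ : ℝ}
    (hd : ∀ i, |d i| ≤ (b - 1) * ρ) (s : ℝ) :
    μ {x | ρ + s < |x|} ≤ μ {x | ρ + b * s < |x|} := by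
  have hmeas : MeasurableSet {x : ℝ | ρ + s < |x|} := measurableSet_lt (by fun_prop) (by fun_prop)
  have hpre (i : ι) : (fun x => (x + d i) / b) ⁻¹' {x | ρ + s < |x|} ⊆ {x | ρ + b * s < |x|} := by
    intro x (hx : ρ + s < |(x + d i) / b|)
    rw [abs_div, abs_of_pos hb, lt_div_iff₀ hb] at hx
    change ρ + b * s < |x|
    linarith [abs_add_le x (d i), hd i]
  calc μ {x | ρ + s < |x|} = ∑ i, p i * μ ((fun x => (x + d i) / b) ⁻¹' {x | ρ + s < |x|}) :=
        hμ.measure_apply hmeas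
    _ ≤ ∑ i, p i * μ {x | ρ + b * s < |x|} := by gcongr with i; exact hpre i
    _ = μ {x | ρ + b * s < |x|} := by rw [← Finset.sum_mul, hμ.sum_weights, one_mul]

lemma measure_lt_abs_eq_zero [IsFiniteMeasure μ] (hμ : IsSelfSimilar b d p μ) (hb : 1 < b)
    {ρ : ℝ} (hd : ∀ i, |d i| ≤ (b - 1) * ρ) {s : ℝ} (hs : 0 < s) :
    μ {x | ρ + s < |x|} = 0 := by
  have hiter (n : ℕ) : μ {x | ρ + s < |x|} ≤ μ {x | ρ + b ^ n * s < |x|} := by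
    induction n with
    | zero => simp
    | succ n ih =>
      refine ih.trans ?_
      simpa only [pow_succ', mul_assoc] using
        hμ.measure_lt_abs_le (zero_lt_one.trans hb) hd (b ^ n * s)
  have htight : Tendsto (fun r : ℝ => μ {x | r < |x|}) atTop (𝓝 0) := by
    simpa using tendsto_measure_norm_gt_of_isTightMeasureSet (isTightMeasureSet_singleton (μ := μ))
  have hradius : Tendsto (fun n : ℕ => ρ + b ^ n * s) atTop atTop :=
    tendsto_atTop_add_const_left _ ρ ((tendsto_pow_atTop_atTop_of_one_lt hb).atTop_mul_const hs)
  exact le_antisymm (ge_of_tendsto' (htight.comp hradius) hiter) zero_le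

lemma abs_le_of_mem_support [IsFiniteMeasure μ] (hμ : IsSelfSimilar b d p μ) (hb : 1 < b)
    {ρ : ℝ} (hd : ∀ i, |d i| ≤ (b - 1) * ρ) {x : ℝ} (hx : x ∈ μ.support) : |x| ≤ ρ := by
  by_contra! hρ
  have hopen : IsOpen {y : ℝ | ρ + (|x| - ρ) / 2 < |y|} :=
    isOpen_lt continuous_const continuous_abs
  refine Measure.notMem_support_iff_exists.2 ⟨_, hopen.mem_nhds ?_,
    hμ.measure_lt_abs_eq_zero hb hd (half_pos (sub_pos.2 hρ))⟩ hx
  change ρ + (|x| - ρ) / 2 < |x|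
  linarith

end IsSelfSimilar

end SelfSimilar

section DigitSum

variable {ι A B : Type*} {b L u : ℕ}

/-- The number with base-`b` digits `d (w 0), d (w 1), …`, least significant first, for digits in
an arbitrary commutative additive monoid. -/
def digitSum [AddCommMonoid A] (b : ℕ) (d : ι → A) (w : Fin L → ι) : A :=
  ∑ j : Fin L, b ^ (j : ℕ) • d (w j)

lemma digitSum_cons [AddCommMonoid A] (b : ℕ) (d : ι → A) (i : ι) (w : Fin L → ι) :
    digitSum b d (Fin.cons i w : Fin (L + 1) → ι) = d i + b • digitSum b d w := by
  simp [digitSum, Fin.sum_univ_succ, Finset.smul_sum, pow_succ', mul_smul]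

lemma digitSum_append [AddCommMonoid A] (b : ℕ) (d : ι → A) (v : Fin u → ι) (w : Fin L → ι) :
    digitSum b d (Fin.append v w) = digitSum b d v + b ^ u • digitSum b d w := by
  simp [digitSum, Fin.sum_univ_add, Finset.smul_sum, pow_add, mul_smul]

lemma map_digitSum [AddCommMonoid A] [AddCommMonoid B] (f : A →+ B) (b : ℕ) (d : ι → A)
    (w : Fin L → ι) : f (digitSum b d w) = digitSum b (fun i => f (d i)) w := by
  simp [digitSum]

lemma nsmul_digitSum_eq_zero [AddCommMonoid A] {d : ι → A} {N : ℕ} (hd : ∀ i, N • d i = 0)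
    (w : Fin L → ι) : N • digitSum b d w = 0 := by
  simp [digitSum, Finset.smul_sum, smul_comm N, hd]

lemma digitSum_const [AddCommMonoid A] {d : ι → A} {i₀ : ι} (hi₀ : d i₀ = 0) :
    digitSum b d (fun _ : Fin L => i₀) = 0 := by
  simp [digitSum, hi₀]

lemma exists_digitSum_eq_of_torsion [AddCommMonoid A] {d : ι → A} {i₀ : ι} (hi₀ : d i₀ = 0)
    (hd : ∀ i, b ^ u • d i = 0) (w : Fin L → ι) :
    ∃ v : Fin u → ι, digitSum b d v = digitSum b d w := by
  obtain ⟨k, rfl⟩ | ⟨k, rfl⟩ : (∃ k, u = L + k) ∨ ∃ k, L = u + k :=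
    (le_total L u).imp Nat.exists_eq_add_of_le Nat.exists_eq_add_of_le
  · exact ⟨Fin.append w fun _ => i₀, by simp [digitSum_append, digitSum_const hi₀]⟩
  · refine ⟨fun j => w (Fin.castAdd k j), ?_⟩
    conv_rhs => rw [← Fin.append_castAdd_natAdd (f := w), digitSum_append,
      nsmul_digitSum_eq_zero hd, add_zero]

lemma norm_digitSum_sub_digitSum_le [SeminormedAddCommGroup A] {d e : ι → A} {δ : ℝ}
    (hb : 2 ≤ b) (hδ₀ : 0 ≤ δ) (hδ : ∀ i, ‖d i - e i‖ ≤ δ) (w : Fin L → ι) :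
    ‖digitSum b d w - digitSum b e w‖ ≤ b ^ L * δ := by
  have hgeom : ∑ j : Fin L, b ^ (j : ℕ) ≤ b ^ L := by
    rw [Fin.sum_univ_eq_sum_range (b ^ ·)]
    exact (Nat.geomSum_lt hb fun j hj => Finset.mem_range.1 hj).le
  calc ‖digitSum b d w - digitSum b e w‖ = ‖∑ j : Fin L, b ^ (j : ℕ) • (d (w j) - e (w j))‖ := by
        simp [digitSum, smul_sub]
    _ ≤ ∑ j : Fin L, (b : ℝ) ^ (j : ℕ) * δ :=
        norm_sum_le_of_le _ fun j _ => (norm_nsmul_le).trans (by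
          push_cast; gcongr; exact hδ _)
    _ ≤ b ^ L * δ := by
        rw [← Finset.sum_mul]
        gcongr
        exact_mod_cast hgeom

lemma exists_nsmul_sub_digitSum_mem [AddCommGroup A] {X : Set A} {d : ι → A}
    (hX : ∀ x ∈ X, ∃ i, b • x - d i ∈ X) (L : ℕ) {x : A} (hx : x ∈ X) :
    ∃ w : Fin L → ι, b ^ L • x - digitSum b d w ∈ X := by
  induction L with
  | zero => exact ⟨Fin.elim0, by simpa [digitSum] using hx⟩
  | succ L ih =>
    obtain ⟨w, hw⟩ := ih
    obtain ⟨i, hi⟩ := hX _ hw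
    refine ⟨Fin.cons i w, ?_⟩
    convert hi using 1
    rw [digitSum_cons, pow_succ', mul_smul, smul_sub]
    abel

end DigitSum

section Torsion

/-- The `N`-torsion point of the circle closest to `x`, with value `0` if `N = 0`. -/
noncomputable def nearestTorsion (N : ℕ) (x : ℝ) : UnitAddCircle :=
  ((round (N * x) / N : ℝ) : UnitAddCircle)

lemma norm_coe_le_abs_sub_intCast (x : ℝ) (m : ℤ) : ‖(x : UnitAddCircle)‖ ≤ |x - m| := by
  rw [UnitAddCircle.norm_eq]
  exact round_le x m

lemma norm_coe_sub_div_le {N : ℕ} (hN : N ≠ 0) {x c ρ : ℝ} (h : |N • x - c| ≤ ρ) :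
    ‖(x : UnitAddCircle) - ((c / N : ℝ) : UnitAddCircle)‖ ≤ ρ / N := by
  have hN' : (0 : ℝ) < N := Nat.cast_pos.2 (Nat.pos_of_ne_zero hN)
  calc ‖(x : UnitAddCircle) - ((c / N : ℝ) : UnitAddCircle)‖ ≤ |x - c / N| :=
        QuotientAddGroup.norm_mk_le_norm
    _ = |N • x - c| / N := by
        rw [nsmul_eq_mul, ← abs_of_pos hN', ← abs_div, abs_of_pos hN', sub_div,
          mul_div_cancel_left₀ _ hN'.ne']
    _ ≤ ρ / N := by gcongr

lemma nearestTorsion_zero (N : ℕ) : nearestTorsion N 0 = 0 := by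
  simp [nearestTorsion]

lemma nsmul_nearestTorsion (N : ℕ) (x : ℝ) : N • nearestTorsion N x = 0 := by
  rcases eq_or_ne N 0 with rfl | hN
  · exact zero_smul ℕ _
  · rw [nearestTorsion, ← AddCircle.coe_nsmul, nsmul_eq_mul,
      mul_div_cancel₀ _ (Nat.cast_ne_zero.2 hN)]
    exact (AddCircle.coe_eq_zero_iff 1).2 ⟨round (N * x), by simp⟩

lemma norm_coe_sub_nearestTorsion_le {N : ℕ} (hN : N ≠ 0) (x : ℝ) :
    ‖(x : UnitAddCircle) - nearestTorsion N x‖ ≤ ‖N • (x : UnitAddCircle)‖ / N := by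
  refine norm_coe_sub_div_le hN (le_of_eq ?_)
  rw [← AddCircle.coe_nsmul, UnitAddCircle.norm_eq, nsmul_eq_mul]

lemma exists_mem_Ioo_of_ae {P : UnitAddCircle → Prop} (hP : ∀ᵐ z, P z) :
    ∃ γ ∈ Ioo (0 : ℝ) 1, P γ := by
  have hIoc : ∀ᵐ y : ℝ ∂volume.restrict (Ioc (0 : ℝ) (0 + 1)), P y :=
    (UnitAddCircle.measurePreserving_mk 0).quasiMeasurePreserving.ae hP
  have hIoo : ∀ᵐ y : ℝ ∂volume.restrict (Ioo (0 : ℝ) 1), P y := by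
    rw [zero_add] at hIoc
    exact ae_restrict_of_ae_restrict_of_subset Ioo_subset_Ioc_self hIoc
  have : NeBot (ae (volume.restrict (Ioo (0 : ℝ) 1))) := ae_neBot.2 (by simp)
  exact ((ae_restrict_mem measurableSet_Ioo).and hIoo).exists

end Torsion

section DigitCover

variable {ι : Type*} {b s u n L : ℕ} {d : ι → ℝ} {ρ R : ℝ}

/-- The points of the circle within `R / b ^ (s * u)` of a sum of a base-`b` number with `u` digits
among the `b ^ u`-torsion approximations of the `d i` and a base-`b` fraction with `s * u` digits
among the `d i`. -/
def digitCover (b s : ℕ) (d : ι → ℝ) (R : ℝ) (u : ℕ) : Set UnitAddCircle :=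
  ⋃ vw : (Fin u → ι) × (Fin (s * u) → ι),
    Metric.closedBall (digitSum b (fun i => nearestTorsion (b ^ u) (d i)) vw.1 +
      ((digitSum b d vw.2 / b ^ (s * u) : ℝ) : UnitAddCircle)) (R / b ^ (s * u))

lemma volume_digitCover_le [Fintype ι] (b s : ℕ) (d : ι → ℝ) (hR : 0 ≤ R) (u : ℕ) :
    volume (digitCover b s d R u) ≤
      ENNReal.ofReal (2 * R * ((Fintype.card ι : ℝ) ^ (1 + s) / b ^ s) ^ u) := by
  refine (measure_iUnion_fintype_le _ _).trans ?_
  calc _ ≤ ∑ _vw : (Fin u → ι) × (Fin (s * u) → ι), ENNReal.ofReal (2 * (R / b ^ (s * u))) := by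
        gcongr
        rw [AddCircle.volume_closedBall]
        exact ENNReal.ofReal_le_ofReal (min_le_right _ _)
    _ = ENNReal.ofReal (2 * R * ((Fintype.card ι : ℝ) ^ (1 + s) / b ^ s) ^ u) := by
        rw [← ENNReal.ofReal_sum_of_nonneg fun _ _ => by positivity]
        congr 1
        simp only [Finset.sum_const, Finset.card_univ, Fintype.card_prod, Fintype.card_fun,
          Fintype.card_fin, nsmul_eq_mul, Nat.cast_mul, Nat.cast_pow]
        rw [div_pow, ← pow_mul, ← pow_mul, add_mul, one_mul, pow_add]
        ring

lemma ae_eventually_notMem_digitCover [Fintype ι]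
    (hs : (Fintype.card ι : ℝ) ^ (1 + s) < b ^ s) (d : ι → ℝ) (hR : 0 ≤ R) :
    ∀ᵐ γ, ∀ᶠ u in atTop, γ ∉ digitCover b s d R u := by
  set q : ℝ := (Fintype.card ι : ℝ) ^ (1 + s) / b ^ s
  have hq₀ : 0 ≤ q := by positivity
  have hq₁ : q < 1 := (div_lt_one ((by positivity : (0 : ℝ) ≤ _).trans_lt hs)).2 hs
  have hsum : Summable fun u : ℕ => 2 * R * q ^ u :=
    (summable_geometric_of_lt_one hq₀ hq₁).mul_left _
  refine ae_eventually_notMem (ne_of_lt ?_)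
  refine lt_of_le_of_lt ?_ (ENNReal.ofReal_lt_top (r := ∑' u, 2 * R * q ^ u))
  rw [ENNReal.ofReal_tsum_of_nonneg (fun u => by positivity) hsum]
  exact ENNReal.tsum_le_tsum fun u => volume_digitCover_le b s d hR u

lemma norm_digitSum_sub_digitSum_nearestTorsion_le (hb : 2 ≤ b)
    (hd : ∀ i, ‖b ^ u • (d i : UnitAddCircle)‖ ≤ ((b : ℝ) ^ (n + s * u))⁻¹) (hL : L ≤ n)
    (w : Fin L → ι) :
    ‖((digitSum b d w : ℝ) : UnitAddCircle) -
      digitSum b (fun i => nearestTorsion (b ^ u) (d i)) w‖ ≤ ((b : ℝ) ^ (s * u))⁻¹ := by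
  have hb₁ : (1 : ℝ) ≤ b := by exact_mod_cast one_le_two.trans hb
  have hδ (i : ι) :
      ‖(d i : UnitAddCircle) - nearestTorsion (b ^ u) (d i)‖ ≤ ((b : ℝ) ^ (n + s * u))⁻¹ :=
    calc _ ≤ ‖b ^ u • (d i : UnitAddCircle)‖ / (b ^ u : ℕ) :=
          norm_coe_sub_nearestTorsion_le (by positivity) (d i)
      _ ≤ ‖b ^ u • (d i : UnitAddCircle)‖ :=
          div_le_self (norm_nonneg _) (by exact_mod_cast one_le_pow₀ hb₁)
      _ ≤ ((b : ℝ) ^ (n + s * u))⁻¹ := hd i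
  calc _ = ‖digitSum b (fun i => (d i : UnitAddCircle)) w -
          digitSum b (fun i => nearestTorsion (b ^ u) (d i)) w‖ := by
        congr 2
        exact map_digitSum (QuotientAddGroup.mk' (AddSubgroup.zmultiples (1 : ℝ))) b d w
    _ ≤ b ^ L * ((b : ℝ) ^ (n + s * u))⁻¹ :=
        norm_digitSum_sub_digitSum_le hb (by positivity) hδ w
    _ ≤ b ^ n * ((b : ℝ) ^ (n + s * u))⁻¹ := by gcongr
    _ = ((b : ℝ) ^ (s * u))⁻¹ := by
        rw [pow_add, mul_inv, mul_inv_cancel_left₀ (pow_ne_zero n (zero_lt_one.trans_le hb₁).ne')]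

-- Modulo 1, the first `L` digits of `x` contribute almost a sum of `b ^ u`-torsion points, which is
-- already a sum of `u` digits; this is why `u` digits suffice however large `L` is.
lemma coe_pow_mul_mem_digitCover (hb : 2 ≤ b) {X : Set ℝ}
    (hX : ∀ x ∈ X, ∃ i, b * x - d i ∈ X) (hρ : ∀ x ∈ X, |x| ≤ ρ) {i₀ : ι} (hi₀ : d i₀ = 0)
    (hd : ∀ i, ‖b ^ u • (d i : UnitAddCircle)‖ ≤ ((b : ℝ) ^ (n + s * u))⁻¹) (hL : L ≤ n)
    {x : ℝ} (hx : x ∈ X) :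
    ((b ^ L * x : ℝ) : UnitAddCircle) ∈ digitCover b s d (ρ + 1) u := by
  simp only [← Nat.cast_pow, ← nsmul_eq_mul] at hX ⊢
  obtain ⟨w, hw⟩ := exists_nsmul_sub_digitSum_mem hX L hx
  obtain ⟨w', hw'⟩ := exists_nsmul_sub_digitSum_mem hX (s * u) hw
  obtain ⟨v, hv⟩ := exists_digitSum_eq_of_torsion (b := b) (u := u) (i₀ := i₀)
    (d := fun i => nearestTorsion (b ^ u) (d i)) (by simp [hi₀, nearestTorsion_zero])
    (fun i => nsmul_nearestTorsion _ _) w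
  have hinitial := norm_digitSum_sub_digitSum_nearestTorsion_le hb hd hL w
  have htail := norm_coe_sub_div_le (pow_ne_zero (s * u) (by lia : b ≠ 0)) (hρ _ hw')
  refine mem_iUnion.2 ⟨(v, w'), ?_⟩
  rw [Metric.mem_closedBall, dist_eq_norm, hv]
  calc _ = ‖((b ^ L • x - digitSum b d w : ℝ) : UnitAddCircle) -
          ((digitSum b d w' / (b ^ (s * u) : ℕ) : ℝ) : UnitAddCircle) +
          (((digitSum b d w : ℝ) : UnitAddCircle) -
            digitSum b (fun i => nearestTorsion (b ^ u) (d i)) w)‖ := by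
        rw [AddCircle.coe_sub, Nat.cast_pow]
        congr 1
        abel
    _ ≤ ρ / (b ^ (s * u) : ℕ) + ((b : ℝ) ^ (s * u))⁻¹ := norm_add_le_of_le htail hinitial
    _ = (ρ + 1) / b ^ (s * u) := by rw [Nat.cast_pow, add_div, one_div]

lemma inv_pow_lt_norm_sub_of_notMem_digitCover {z γ : UnitAddCircle}
    (hz : z ∈ digitCover b s d R u) (hγ : γ ∉ digitCover b s d (R + 1) u) :
    ((b : ℝ) ^ (s * u))⁻¹ < ‖z - γ‖ := by
  by_contra! hclose
  obtain ⟨vw, hvw⟩ := mem_iUnion.1 hz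
  refine hγ (mem_iUnion.2 ⟨vw, (dist_triangle_left _ _ z).trans ?_⟩)
  rw [add_comm R, add_div, one_div, dist_eq_norm]
  exact add_le_add hclose hvw

end DigitCover

section HyperLiouville

variable {ι : Type*} {b : ℕ} {d : ι → ℝ}

/-- Infinitely many powers `b ^ u` bring all the `d i` simultaneously within `b ^ (-b ^ (C * u))`
of integers, for each `C`. This is the form of extreme simultaneous approximability by `b`-adic
rationals that Knuth towers provide; distances to `ℤ` are norms in the circle. -/
def HyperLiouville (b : ℕ) (d : ι → ℝ) : Prop :=
  ∀ C : ℕ, ∃ᶠ u in atTop, ∀ i, ‖b ^ u • (d i : UnitAddCircle)‖ ≤ ((b : ℝ) ^ b ^ (C * u))⁻¹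

lemma HyperLiouville.frequently_norm_nsmul_le (hd : HyperLiouville b d) (hb : 2 ≤ b) (C s : ℕ) :
    ∃ᶠ u in atTop, ∀ i,
      ‖b ^ u • (d i : UnitAddCircle)‖ ≤ ((b : ℝ) ^ (b ^ (C * u) + s * u))⁻¹ := by
  refine (hd (C + s)).mono fun u hu i => (hu i).trans ?_
  have hexp : b ^ (C * u) + s * u ≤ b ^ ((C + s) * u) :=
    calc b ^ (C * u) + s * u ≤ b ^ (C * u) * (s * u + 1) := by
          rw [mul_add_one, add_comm]
          exact Nat.add_le_add_right (Nat.le_mul_of_pos_left _ (by positivity)) _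
      _ ≤ b ^ (C * u) * b ^ (s * u) := by gcongr; exact Nat.lt_pow_self hb
      _ = b ^ ((C + s) * u) := by rw [add_mul, pow_add]
  have hb₁ : (1 : ℝ) ≤ b := by exact_mod_cast one_le_two.trans hb
  gcongr

end HyperLiouville

section Lacunary

variable {a : ℕ → ℕ} {b : ℕ}

lemma pow_le_pow_mul_pow_of_strictMono (ha : StrictMono a) {r : ℝ} (hr₀ : 0 ≤ r) (hr₁ : r ≤ 1)
    (n : ℕ) : r ^ a n ≤ r ^ a 0 * r ^ n := by
  rw [← pow_add, add_comm]
  exact pow_le_pow_of_le_one hr₀ hr₁ (ha.add_le_nat n 0)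

lemma summable_pow_of_strictMono (ha : StrictMono a) {r : ℝ} (hr₀ : 0 ≤ r) (hr₁ : r < 1) :
    Summable fun n => r ^ a n :=
  (summable_geometric_of_lt_one hr₀ hr₁).comp_injective ha.injective

lemma tsum_pow_le_of_strictMono (ha : StrictMono a) {r : ℝ} (hr₀ : 0 ≤ r) (hr : r ≤ 1 / 2) :
    ∑' n, r ^ a n ≤ 2 * r ^ a 0 := by
  have hr₁ : r < 1 := hr.trans_lt one_half_lt_one
  calc ∑' n, r ^ a n ≤ ∑' n, r ^ a 0 * r ^ n :=
        (summable_pow_of_strictMono ha hr₀ hr₁).tsum_le_tsum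
          (pow_le_pow_mul_pow_of_strictMono ha hr₀ hr₁.le)
          ((summable_geometric_of_lt_one hr₀ hr₁).mul_left _)
    _ = (1 - r)⁻¹ * r ^ a 0 := by rw [tsum_mul_left, tsum_geometric_of_lt_one hr₀ hr₁, mul_comm]
    _ ≤ 2 * r ^ a 0 := by
        gcongr
        exact inv_le_of_inv_le₀ two_pos (by linarith)

lemma norm_pow_nsmul_tsum_inv_pow_le (ha : StrictMono a) (hb : 2 ≤ b) (k : ℕ) :
    ‖b ^ a k • ((∑' n, (b : ℝ)⁻¹ ^ a n : ℝ) : UnitAddCircle)‖ ≤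
      b ^ a k * (2 * (b : ℝ)⁻¹ ^ a (k + 1)) := by
  have hb₂ : (2 : ℝ) ≤ b := by exact_mod_cast hb
  have hinv : (b : ℝ)⁻¹ ≤ 1 / 2 := by rw [one_div]; gcongr
  set tail : ℝ := ∑' n, (b : ℝ)⁻¹ ^ a (n + (k + 1))
  have hsplit : b ^ a k * ∑' n, (b : ℝ)⁻¹ ^ a n -
      (∑ n ∈ Finset.range (k + 1), b ^ (a k - a n) : ℕ) = b ^ a k * tail := by
    rw [← (summable_pow_of_strictMono ha (by positivity)
      (hinv.trans_lt one_half_lt_one)).sum_add_tsum_nat_add (k + 1), mul_add, Finset.mul_sum,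
      add_sub_right_comm, add_eq_right, sub_eq_zero]
    push_cast
    refine Finset.sum_congr rfl fun n hn => ?_
    rw [inv_pow, pow_sub₀ _ (by positivity) (ha.monotone (Finset.mem_range_succ_iff.1 hn))]
  have htail : tail ≤ 2 * (b : ℝ)⁻¹ ^ a (k + 1) := by
    simpa only [Function.comp_apply, id_eq, zero_add] using
      tsum_pow_le_of_strictMono (ha.comp (strictMono_id.add_const (k + 1))) (by positivity) hinv
  rw [← AddCircle.coe_nsmul, nsmul_eq_mul, Nat.cast_pow]
  refine (norm_coe_le_abs_sub_intCast _
    (∑ n ∈ Finset.range (k + 1), b ^ (a k - a n) : ℕ)).trans ?_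
  rw [Int.cast_natCast, hsplit,
    abs_of_nonneg (mul_nonneg (by positivity) (tsum_nonneg fun n => by positivity))]
  gcongr

lemma norm_pow_nsmul_tsum_inv_pow_le_of_le (ha : StrictMono a) (hb : 2 ≤ b) {k M : ℕ}
    (hk : M + a k + 1 ≤ a (k + 1)) :
    ‖b ^ a k • ((∑' n, (b : ℝ)⁻¹ ^ a n : ℝ) : UnitAddCircle)‖ ≤ ((b : ℝ) ^ M)⁻¹ := by
  have hb₂ : (2 : ℝ) ≤ b := by exact_mod_cast hb
  have hb₁ : (b : ℝ)⁻¹ ≤ 1 := inv_le_one_of_one_le₀ (by linarith)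
  calc _ ≤ b ^ a k * (2 * (b : ℝ)⁻¹ ^ a (k + 1)) := norm_pow_nsmul_tsum_inv_pow_le ha hb k
    _ ≤ b ^ a k * (b * (b : ℝ)⁻¹ ^ (M + a k + 1)) := by
        gcongr ?_ * (?_ * ?_)
        exact pow_le_pow_of_le_one (by positivity) hb₁ hk
    _ = ((b : ℝ) ^ M)⁻¹ := by
        have : (b : ℝ) ≠ 0 := by positivity
        rw [inv_pow]
        field_simp
        ring

end Lacunary

section Tower

lemma strictMono_tow : StrictMono tow :=
  strictMono_nat_of_lt_succ fun _ => Nat.lt_pow_self (by norm_num)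

lemma ten_pow_mul_add_le {C a : ℕ} (hC : C ≤ a) :
    10 ^ (C * a) + a + 1 ≤ 10 ^ 10 ^ 10 ^ a := by
  have hlt (n : ℕ) : n < 10 ^ n := Nat.lt_pow_self (by norm_num)
  have hsq : C * a ≤ 10 ^ a :=
    calc C * a ≤ a * a := by gcongr
      _ ≤ 2 ^ a * 2 ^ a := by gcongr <;> exact Nat.lt_two_pow_self.le
      _ ≤ 10 ^ a := by rw [← mul_pow]; gcongr; norm_num
  calc 10 ^ (C * a) + a + 1 ≤ 10 ^ 10 ^ a + 10 ^ 10 ^ a := by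
        rw [add_assoc]
        gcongr
        · norm_num
        · exact (hlt a).trans (hlt _)
    _ ≤ 10 ^ (10 ^ a + 1) := by rw [pow_succ]; lia
    _ ≤ 10 ^ 10 ^ 10 ^ a := by gcongr; exacts [by norm_num, hlt _]

theorem hyperLiouville_tow :
    HyperLiouville 10 ![0, 1, ∑' n : ℕ, (1 : ℝ) / (tow (3 * (n + 1)) : ℝ)] := by
  intro C
  set a : ℕ → ℕ := fun k => tow (3 * k + 2)
  have ha : StrictMono a := strictMono_tow.comp fun _ _ h => by lia
  have hsum : ∑' n : ℕ, (1 : ℝ) / (tow (3 * (n + 1)) : ℝ) = ∑' n, ((10 : ℕ) : ℝ)⁻¹ ^ a n := by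
    simp [a, mul_add, tow]
  refine ha.tendsto_atTop.frequently (Eventually.frequently ?_)
  filter_upwards [eventually_ge_atTop C] with k hk
  have hgrowth : 10 ^ (C * a k) + a k + 1 ≤ a (k + 1) :=
    ten_pow_mul_add_le (hk.trans (ha.id_le k))
  have hone : ((1 : ℝ) : UnitAddCircle) = 0 := AddCircle.coe_period 1
  rw [hsum]
  simp only [Fin.forall_fin_succ]
  refine ⟨by simp, by simp [hone], ?_, nofun⟩
  exact norm_pow_nsmul_tsum_inv_pow_le_of_le ha (by norm_num) hgrowth

end Tower

section Rate

variable {b s : ℕ} {E : ℕ → ℕ}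

lemma exists_pow_one_add_lt_pow {c q : ℝ} (hc : 0 < c) (hcq : c < q) :
    ∃ s : ℕ, c ^ (1 + s) < q ^ s := by
  have hq : 0 < q := hc.trans hcq
  obtain ⟨s, hs⟩ := exists_pow_lt_of_lt_one (inv_pos.2 hc) ((div_lt_one hq).2 hcq)
  refine ⟨s, ?_⟩
  rwa [div_pow, div_lt_iff₀ (by positivity), lt_inv_mul_iff₀ hc, ← pow_succ', add_comm] at hs

lemma exists_monotone_frequently_le (hb : 2 ≤ b) {P : ℕ → ℕ → Prop}
    (hP : ∀ u, Antitone fun n => P n u) (hfreq : ∀ C, ∃ᶠ u in atTop, P (b ^ (C * u)) u) :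
    ∃ E : ℕ → ℕ, Monotone E ∧ (∀ n, P n (E n)) ∧ ∀ C, ∃ᶠ u in atTop, E (b ^ (C * u)) ≤ u := by
  classical
  have hex (n : ℕ) : ∃ u, P n u := by
    obtain ⟨u, hu, hnu⟩ := ((hfreq 1).and_eventually (eventually_ge_atTop n)).exists
    rw [one_mul] at hu
    exact ⟨u, hP u (hnu.trans (Nat.lt_pow_self hb).le) hu⟩
  refine ⟨fun n => Nat.find (hex n), fun m n hmn => ?_, fun n => Nat.find_spec (hex n),
    fun C => (hfreq C).mono fun u hu => Nat.find_min' _ hu⟩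
  exact Nat.find_min' _ (hP _ hmn (Nat.find_spec (hex n)))

lemma frequently_rpow_neg_le_inv_pow (hb : 2 ≤ b)
    (hE : ∀ C, ∃ᶠ u in atTop, E (b ^ (C * u)) ≤ u) (s : ℕ) {ε : ℝ} (hε : 0 < ε) :
    ∃ᶠ N : ℕ in atTop, (N : ℝ) ^ (-ε) ≤ ((b : ℝ) ^ (s * E N))⁻¹ := by
  have hb₁ : (1 : ℝ) ≤ b := by exact_mod_cast one_le_two.trans hb
  obtain ⟨C, hC⟩ := exists_nat_gt (s / ε)
  rw [div_lt_iff₀ hε] at hC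
  have hC₀ : C ≠ 0 := by
    rintro rfl
    simp only [Nat.cast_zero, zero_mul] at hC
    exact hC.not_ge s.cast_nonneg
  have htendsto : Tendsto (fun u => b ^ (C * u)) atTop atTop :=
    (tendsto_pow_atTop_atTop_of_one_lt hb).comp (tendsto_id.const_mul_atTop' (by lia))
  refine htendsto.frequently ((hE C).mono fun u hu => ?_)
  calc ((b ^ (C * u) : ℕ) : ℝ) ^ (-ε) = ((b : ℝ) ^ (C * ε * u))⁻¹ := by
        rw [Nat.cast_pow, ← Real.rpow_natCast, ← Real.rpow_mul (by positivity),
          ← Real.rpow_neg (by positivity)]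
        congr 1
        push_cast
        ring
    _ ≤ ((b : ℝ) ^ (s * u : ℝ))⁻¹ := by gcongr
    _ = ((b : ℝ) ^ (s * u))⁻¹ := by rw [← Nat.cast_mul, Real.rpow_natCast]
    _ ≤ ((b : ℝ) ^ (s * E (b ^ (C * u))))⁻¹ := by gcongr

end Rate

section Avoidance

variable {ι : Type*} [Fintype ι] {b : ℕ} {d : ι → ℝ} {i₀ : ι}

theorem exists_rate_lt_norm_coe_pow_mul_sub (hb : 2 ≤ b) (hcard : Fintype.card ι < b)
    (hi₀ : d i₀ = 0) (hd : HyperLiouville b d) {X : Set ℝ} {ρ : ℝ}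
    (hX : ∀ x ∈ X, ∃ i, b * x - d i ∈ X) (hρ₀ : 0 ≤ ρ) (hρ : ∀ x ∈ X, |x| ≤ ρ) :
    ∃ (s : ℕ) (E : ℕ → ℕ) (γ : ℝ), Monotone E ∧ (∀ C, ∃ᶠ u in atTop, E (b ^ (C * u)) ≤ u) ∧
      γ ∈ Ioo 0 1 ∧ ∀ x ∈ X, ∀ n, ∀ L ≤ n,
        ((b : ℝ) ^ (s * E n))⁻¹ < ‖((b ^ L * x : ℝ) : UnitAddCircle) - (γ : UnitAddCircle)‖ := by
  have hb₁ : (1 : ℝ) ≤ b := by exact_mod_cast one_le_two.trans hb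
  obtain ⟨s, hs⟩ := exists_pow_one_add_lt_pow (c := Fintype.card ι) (q := b)
    (Nat.cast_pos.2 (Fintype.card_pos_iff.2 ⟨i₀⟩)) (Nat.cast_lt.2 hcard)
  obtain ⟨γ, hγ₀₁, hγ⟩ := exists_mem_Ioo_of_ae
    (ae_eventually_notMem_digitCover hs d (by positivity : 0 ≤ ρ + 1 + 1))
  obtain ⟨E, hEmono, hE, hEfreq⟩ := exists_monotone_frequently_le hb
    (P := fun n u => (γ : UnitAddCircle) ∉ digitCover b s d (ρ + 1 + 1) u ∧
      ∀ i, ‖b ^ u • (d i : UnitAddCircle)‖ ≤ ((b : ℝ) ^ (n + s * u))⁻¹)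
    (fun u m n hmn hn => ⟨hn.1, fun i => (hn.2 i).trans (by gcongr)⟩)
    (fun C => ((hd.frequently_norm_nsmul_le hb C s).and_eventually hγ).mono fun _ hu => hu.symm)
  refine ⟨s, E, γ, hEmono, hEfreq, hγ₀₁, fun x hx n L hL => ?_⟩
  exact inv_pow_lt_norm_sub_of_notMem_digitCover
    (coe_pow_mul_mem_digitCover hb hX hρ hi₀ (hE n).2 hL hx) (hE n).1

theorem stmt2_general (hcard : Fintype.card ι < b) (hi₀ : d i₀ = 0) (hd : HyperLiouville b d)
    {p : ι → ℝ≥0∞} {μ : Measure ℝ} [IsFiniteMeasure μ] (hμ : IsSelfSimilar b d p μ) :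
    ∃ (ψ : ℕ → ℝ) (γ : ℝ),
      (∀ n : ℕ, 1 ≤ n → 0 < ψ n) ∧
      (∀ n : ℕ, 1 ≤ n → ψ (n + 1) ≤ ψ n) ∧
      0 < γ ∧ γ < 1 ∧
      Tendsto (fun N : ℕ => ∑ n ∈ Finset.Icc 1 N, ψ n) atTop atTop ∧
      limsup (fun N : ℕ => Real.log (∑ n ∈ Finset.Icc 1 N, ψ n) / Real.log (N : ℝ)) atTop = 1 ∧
      (∀ x ∈ μ.support, ∀ n : ℕ, 1 ≤ n → ∀ m : ℤ,
        ψ n < |(b : ℝ) ^ (n - 1) * x - γ - (m : ℝ)|) := by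
  have hb : 2 ≤ b := (Nat.succ_le_succ (Fintype.card_pos_iff.2 ⟨i₀⟩)).trans hcard
  have hb₂ : (2 : ℝ) ≤ b := by exact_mod_cast hb
  have hρ₀ : 0 ≤ ∑ i, |d i| := Finset.sum_nonneg fun i _ => abs_nonneg (d i)
  have hρ (i : ι) : |d i| ≤ (b - 1) * ∑ i, |d i| :=
    (Finset.single_le_sum (fun i _ => abs_nonneg (d i)) (Finset.mem_univ i)).trans
      (le_mul_of_one_le_left hρ₀ (by linarith))
  obtain ⟨s, E, γ, hEmono, hE, hγ, havoid⟩ := exists_rate_lt_norm_coe_pow_mul_sub hb hcard hi₀ hd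
    (fun x => hμ.exists_mul_sub_mem_support (by positivity)) hρ₀
    (fun x => hμ.abs_le_of_mem_support (by linarith) hρ)
  set ψ : ℕ → ℝ := fun n => ((b : ℝ) ^ (s * E n))⁻¹
  have hpos (n : ℕ) : 0 < ψ n := by positivity
  have hle (n : ℕ) : ψ n ≤ 1 := inv_le_one_of_one_le₀ (one_le_pow₀ (by linarith))
  have hψ : Antitone ψ := fun m n hmn => by
    have : E m ≤ E n := hEmono hmn
    have hb₁ : (1 : ℝ) ≤ b := by linarith
    simp only [ψ]
    gcongr
  have hlow (ε : ℝ) (hε : 0 < ε) := frequently_rpow_neg_le_inv_pow hb hE s hε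
  refine ⟨ψ, γ, fun n _ => hpos n, fun n _ => hψ n.le_succ, hγ.1, hγ.2,
    tendsto_sum_Icc_atTop hpos hψ hlow, limsup_log_sum_Icc_div_log_eq_one hpos hle hψ hlow,
    fun x hx n _ m => ?_⟩
  exact (havoid x hx n (n - 1) n.pred_le).trans_le (norm_coe_le_abs_sub_intCast _ m)

end Avoidance

/-- For `t = Σ 1/(10↑↑(3n))` and `X_t` the support of `μ_t`, there exist a monotonically
decreasing sequence `ψ(1), ψ(2), …` of positive reals and `γ ∈ (0,1)` with
`limsup_N log Ψ(N)/log N = 1` (and `Ψ(N) → ∞`), such that for all `x ∈ X_t`, all `n ≥ 1`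
and all integers `m`, `|10^{n-1} x − γ − m| > ψ(n)`. -/
theorem stmt2 (t : ℝ) (ht : t = ∑' n : ℕ, (1 : ℝ) / (tow (3 * (n + 1)) : ℝ))
    (μ : Measure ℝ) (hprob : IsProbabilityMeasure μ) (hinv : muInv t μ) :
    ∃ (ψ : ℕ → ℝ) (γ : ℝ),
      (∀ n : ℕ, 1 ≤ n → 0 < ψ n) ∧
      (∀ n : ℕ, 1 ≤ n → ψ (n + 1) ≤ ψ n) ∧
      0 < γ ∧ γ < 1 ∧
      Tendsto (fun N : ℕ => ∑ n ∈ Finset.Icc 1 N, ψ n) atTop atTop ∧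
      Filter.limsup
        (fun N : ℕ => Real.log (∑ n ∈ Finset.Icc 1 N, ψ n) / Real.log (N : ℝ)) atTop = 1 ∧
      (∀ x ∈ msupport μ, ∀ n : ℕ, 1 ≤ n → ∀ m : ℤ,
        ψ n < |(10 : ℝ) ^ (n - 1) * x - γ - (m : ℝ)|) := by
  subst ht
  simpa only [Nat.cast_ofNat, msupport_eq_support] using stmt2_general (b := 10) (i₀ := 0)
    (by simp) rfl hyperLiouville_tow (isSelfSimilar_of_muInv hinv)
end

section
/- Let μ be a self-similar measure on [0,1] (so μ = Σ_a p_a (T_a)_* μ for finitely many contracting similarities T_a : [0,1] → [0,1] and a probability vector with positive entries, μ non-atomic). Let f : [0,1] → ℝ be a C² map and let Z = {x ∈ [0,1] : f''(x) = 0}. If μ(Z) = 0, then the pushforward measure f_* μ is Rajchman. -/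
open MeasureTheory Filter Set
open scoped ENNReal NNReal

/-- The Fourier transform of a measure on `ℝ`: `μ̂(ξ) = ∫ e^{2πiξx} dμ(x)`. -/
noncomputable def ft (μ : Measure ℝ) (ξ : ℝ) : ℂ :=
  ∫ x, Complex.exp (((2 * Real.pi * ξ * x : ℝ) : ℂ) * Complex.I) ∂μ

/-- A measure is Rajchman if its Fourier transform tends to `0` as `|ξ| → ∞`. -/
def Rajchman (μ : Measure ℝ) : Prop :=
  Tendsto (ft μ) (cocompact ℝ) (nhds 0)

/-! Composing two of the similarities in both orders gives two similarities with the same ratio and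
the same weight, and, for a suitable pair, with different translations. Their contributions to the
characteristic function `μ̂ η` therefore cancel partially, and iterating the self-similarity `N`
times bounds `|μ̂|` by a `majorant`, a sum over words of length `N` of products of damping factors.

Cut `μ` into cylinders of size `|ξ|^(-1/2)`. On each of them `f` is affine up to a small phase
error, so the oscillatory integral of `f` over the cylinder of ratio `ρ` is a value of `μ̂` at a
frequency proportional to `ρ * f'`. The majorant is log-Lipschitz, so these values can be averaged
over the cylinder. If `|f''|` is bounded below, then `f'` is bi-Lipschitz, the frequency
equidistributes enough for every damping factor to cost a fixed proportion, and the average decays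
exponentially in `N`. This beats the number of possible ratios `ρ`, which is only polynomial in
`log |ξ|`. Finally, `μ(f'' = 0) = 0` makes the part of `μ` carried by small cylinders meeting
`{|f''| small}` negligible.
-/

open ProbabilityTheory
open scoped Topology

section Phases

lemma continuous_circleExp : Continuous fun x : ℝ ↦ (Circle.exp x : ℂ) := by
  fun_prop

lemma norm_circleExp_sub_le (x y : ℝ) : ‖(Circle.exp x : ℂ) - Circle.exp y‖ ≤ |x - y| := by
  have h : (Circle.exp x : ℂ) - Circle.exp y =
      Circle.exp y * (Complex.exp (Complex.I * (x - y : ℝ)) - 1) := by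
    rw [mul_comm Complex.I, ← Circle.coe_exp, mul_sub, ← Circle.coe_mul, ← Circle.exp_add,
      add_sub_cancel, mul_one]
  rw [h, norm_mul, Circle.norm_coe, one_mul, ← Real.norm_eq_abs]
  exact Real.norm_exp_I_mul_ofReal_sub_one_le

/-- A smooth majorant of `|cos|`. Unlike `|cos|` it is bounded away from `0`, which makes it
log-Lipschitz. -/
noncomputable def damping (u : ℝ) : ℝ := 1 - Real.sin u ^ 2 / 2

lemma continuous_damping : Continuous damping := by
  unfold damping
  fun_prop

lemma half_le_damping (u : ℝ) : 1 / 2 ≤ damping u := by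
  unfold damping
  linarith [Real.sin_sq_le_one u]

lemma damping_nonneg (u : ℝ) : 0 ≤ damping u := by
  linarith [half_le_damping u]

lemma damping_le_one (u : ℝ) : damping u ≤ 1 := by
  unfold damping
  linarith [sq_nonneg (Real.sin u)]

lemma abs_cos_le_damping (u : ℝ) : |Real.cos u| ≤ damping u := by
  unfold damping
  nlinarith [sq_nonneg (|Real.cos u| - 1), sq_abs (Real.cos u), Real.sin_sq_add_cos_sq u]

lemma norm_circleExp_add_le (x y : ℝ) :
    ‖(Circle.exp x : ℂ) + Circle.exp y‖ ≤ 2 * damping ((x - y) / 2) := by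
  have h : (Circle.exp x : ℂ) + Circle.exp y =
      Circle.exp ((x + y) / 2) * (2 * Real.cos ((x - y) / 2) : ℝ) := by
    have hx : (Circle.exp x : ℂ) = Circle.exp ((x + y) / 2) * Circle.exp ((x - y) / 2) := by
      rw [← Circle.coe_mul, ← Circle.exp_add]
      ring_nf
    have hy : (Circle.exp y : ℂ) = Circle.exp ((x + y) / 2) * Circle.exp (-((x - y) / 2)) := by
      rw [← Circle.coe_mul, ← Circle.exp_add]
      ring_nf
    rw [hx, hy, ← mul_add, Circle.coe_exp ((x - y) / 2), Circle.coe_exp (-((x - y) / 2))]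
    push_cast
    rw [Complex.two_cos]
  rw [h, norm_mul, Circle.norm_coe, one_mul, Complex.norm_real, Real.norm_eq_abs, abs_mul, abs_two]
  gcongr
  exact abs_cos_le_damping _

lemma abs_sin_sq_sub_sin_sq_le (x y : ℝ) : |Real.sin x ^ 2 - Real.sin y ^ 2| ≤ |x - y| := by
  have h : Real.sin x ^ 2 - Real.sin y ^ 2 = Real.sin (x + y) * Real.sin (x - y) := by
    rw [Real.sin_add, Real.sin_sub]
    linear_combination (Real.sin y ^ 2) * Real.sin_sq_add_cos_sq x
      - (Real.sin x ^ 2) * Real.sin_sq_add_cos_sq y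
  rw [h, abs_mul]
  exact (mul_le_of_le_one_left (abs_nonneg _) (Real.abs_sin_le_one _)).trans Real.abs_sin_le_abs

end Phases

section LogLipschitz

variable {X Y : Type*} [PseudoMetricSpace X] [PseudoMetricSpace Y] {K L M : ℝ} {v w : X → ℝ}
  {A : Set X} {B : Set Y}

/-- `w` is nonnegative on `A` and `log w` is `K`-Lipschitz there. The Lipschitz condition is stated
multiplicatively, so that `w = 0` is allowed. -/
structure LogLipschitzOn (K : ℝ) (w : X → ℝ) (A : Set X) : Prop where
  nonneg : ∀ x ∈ A, 0 ≤ w x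
  le_exp_mul : ∀ x ∈ A, ∀ y ∈ A, w x ≤ Real.exp (K * dist x y) * w y

namespace LogLipschitzOn

lemma weaken (hw : LogLipschitzOn K w A) (hKL : K ≤ L) : LogLipschitzOn L w A where
  nonneg := hw.nonneg
  le_exp_mul x hx y hy := (hw.le_exp_mul x hx y hy).trans <| by
    have := hw.nonneg y hy
    gcongr

lemma const {c : ℝ} (hc : 0 ≤ c) : LogLipschitzOn 0 (fun _ : X ↦ c) A where
  nonneg _ _ := hc
  le_exp_mul _ _ _ _ := by simp

lemma mul (hv : LogLipschitzOn K v A) (hw : LogLipschitzOn L w A) :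
    LogLipschitzOn (K + L) (fun x ↦ v x * w x) A where
  nonneg x hx := mul_nonneg (hv.nonneg x hx) (hw.nonneg x hx)
  le_exp_mul x hx y hy := calc
    v x * w x ≤ (Real.exp (K * dist x y) * v y) * (Real.exp (L * dist x y) * w y) := by
      have := hv.nonneg y hy
      exact mul_le_mul (hv.le_exp_mul x hx y hy) (hw.le_exp_mul x hx y hy) (hw.nonneg x hx)
        (by positivity)
    _ = Real.exp ((K + L) * dist x y) * (v y * w y) := by
      rw [add_mul, Real.exp_add]
      ring

lemma sum {ι : Type*} {s : Finset ι} {w : ι → X → ℝ} (hw : ∀ i ∈ s, LogLipschitzOn K (w i) A) :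
    LogLipschitzOn K (fun x ↦ ∑ i ∈ s, w i x) A where
  nonneg x hx := Finset.sum_nonneg fun i hi ↦ (hw i hi).nonneg x hx
  le_exp_mul x hx y hy := by
    rw [Finset.mul_sum]
    exact Finset.sum_le_sum fun i hi ↦ (hw i hi).le_exp_mul x hx y hy

lemma comp (hw : LogLipschitzOn K w A) (hK : 0 ≤ K) {G : Y → X} (hG : MapsTo G B A)
    (hGM : ∀ x ∈ B, ∀ y ∈ B, dist (G x) (G y) ≤ M * dist x y) :
    LogLipschitzOn (K * M) (fun x ↦ w (G x)) B where
  nonneg x hx := hw.nonneg _ (hG hx)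
  le_exp_mul x hx y hy := (hw.le_exp_mul _ (hG hx) _ (hG hy)).trans <| by
    have := hw.nonneg _ (hG hy)
    rw [mul_assoc]
    gcongr
    exact hGM x hx y hy

lemma continuousOn (hw : LogLipschitzOn K w A) : ContinuousOn w A := by
  intro x hx
  have hexp (k : ℝ) : Tendsto (fun y ↦ Real.exp (k * dist y x) * w x) (𝓝[A] x) (𝓝 (w x)) := by
    have : Continuous fun y ↦ Real.exp (k * dist y x) * w x := by fun_prop
    simpa using (this.continuousWithinAt (s := A) (x := x)).tendsto
  refine tendsto_of_tendsto_of_tendsto_of_le_of_le' (hexp (-K)) (hexp K) ?_ ?_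
  · filter_upwards [self_mem_nhdsWithin] with y hy
    rw [neg_mul, Real.exp_neg, inv_mul_le_iff₀ (Real.exp_pos _), dist_comm]
    exact hw.le_exp_mul x hx y hy
  · filter_upwards [self_mem_nhdsWithin] with y hy
    exact hw.le_exp_mul y hy x hx

end LogLipschitzOn

lemma logLipschitzOn_damping : LogLipschitzOn 1 damping univ where
  nonneg x _ := damping_nonneg x
  le_exp_mul x _ y _ := calc
    damping x ≤ damping y + |x - y| / 2 := by
      have := (abs_le.1 (abs_sin_sq_sub_sin_sq_le x y)).1
      unfold damping
      linarith
    _ ≤ (1 + |x - y|) * damping y := by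
      nlinarith [half_le_damping y, abs_nonneg (x - y)]
    _ ≤ Real.exp (1 * dist x y) * damping y := by
      gcongr
      · exact damping_nonneg y
      · rw [one_mul, Real.dist_eq, add_comm]
        exact Real.add_one_le_exp _

end LogLipschitz

section BiLipschitz

/-- `φ` is bi-Lipschitz on `A` at scale `M` and with distortion `s`: its difference quotients have
absolute value in `[s * M, M]`. -/
structure BiLipschitzOn (s M : ℝ) (φ : ℝ → ℝ) (A : Set ℝ) : Prop where
  mul_le : ∀ x ∈ A, ∀ y ∈ A, s * M * |x - y| ≤ |φ x - φ y|
  le_mul : ∀ x ∈ A, ∀ y ∈ A, |φ x - φ y| ≤ M * |x - y|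

lemma continuousOn_of_abs_sub_le {M : ℝ} {φ : ℝ → ℝ} {A : Set ℝ}
    (h : ∀ x ∈ A, ∀ y ∈ A, |φ x - φ y| ≤ M * |x - y|) : ContinuousOn φ A := by
  have : LipschitzOnWith M.toNNReal φ A := .of_dist_le_mul fun x hx y hy ↦
    (h x hx y hy).trans (mul_le_mul_of_nonneg_right (Real.le_coe_toNNReal M) (abs_nonneg _))
  exact this.continuousOn

lemma nonneg_of_abs_sub_le {M : ℝ} {φ : ℝ → ℝ}
    (h : ∀ x ∈ Icc (0 : ℝ) 1, ∀ y ∈ Icc (0 : ℝ) 1, |φ x - φ y| ≤ M * |x - y|) : 0 ≤ M := by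
  have := (abs_nonneg _).trans (h 1 (by simp) 0 (by simp))
  simpa using this

namespace BiLipschitzOn

variable {s M : ℝ} {φ : ℝ → ℝ} {A B : Set ℝ}

lemma const_mul (h : BiLipschitzOn s M φ A) (a : ℝ) :
    BiLipschitzOn s (|a| * M) (fun x ↦ a * φ x) A where
  mul_le x hx y hy := by
    rw [← mul_sub, abs_mul]
    linarith [mul_le_mul_of_nonneg_left (h.mul_le x hx y hy) (abs_nonneg a)]
  le_mul x hx y hy := by
    rw [← mul_sub, abs_mul, mul_assoc]
    exact mul_le_mul_of_nonneg_left (h.le_mul x hx y hy) (abs_nonneg a)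

lemma comp_affine (h : BiLipschitzOn s M φ A) {ρ t : ℝ}
    (hT : MapsTo (fun x ↦ ρ * x + t) B A) :
    BiLipschitzOn s (|ρ| * M) (fun x ↦ φ (ρ * x + t)) B where
  mul_le x hx y hy := by
    have := h.mul_le _ (hT hx) _ (hT hy)
    rw [add_sub_add_right_eq_sub, ← mul_sub, abs_mul] at this
    linarith
  le_mul x hx y hy := by
    have := h.le_mul _ (hT hx) _ (hT hy)
    rw [add_sub_add_right_eq_sub, ← mul_sub, abs_mul] at this
    linarith

lemma of_scale_mem {s' M' : ℝ} (h : BiLipschitzOn s M φ A) (hM : M ≤ M') (hs : s' * M' ≤ s * M) :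
    BiLipschitzOn s' M' φ A where
  mul_le x hx y hy := (mul_le_mul_of_nonneg_right hs (abs_nonneg _)).trans (h.mul_le x hx y hy)
  le_mul x hx y hy := (h.le_mul x hx y hy).trans (mul_le_mul_of_nonneg_right hM (abs_nonneg _))

lemma continuousOn (h : BiLipschitzOn s M φ A) : ContinuousOn φ A :=
  continuousOn_of_abs_sub_le h.le_mul

lemma continuousOn_sin_sq (h : BiLipschitzOn s M φ A) :
    ContinuousOn (fun x ↦ Real.sin (φ x) ^ 2) A :=
  (Real.continuous_sin.comp_continuousOn h.continuousOn).pow 2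

lemma of_hasDerivWithinAt {φ' : ℝ → ℝ} (hA : Convex ℝ A)
    (hφ : ∀ x ∈ A, HasDerivWithinAt φ (φ' x) A x)
    (hlow : ∀ x ∈ A, s * M ≤ |φ' x|) (hupp : ∀ x ∈ A, |φ' x| ≤ M) : BiLipschitzOn s M φ A := by
  have mvt : ∀ x ∈ A, ∀ y ∈ A, x < y → ∃ z ∈ A, φ y - φ x = φ' z * (y - x) := by
    intro x hx y hy hxy
    have hsub : Icc x y ⊆ A := hA.ordConnected.out hx hy
    obtain ⟨z, hz, hz'⟩ := exists_hasDerivAt_eq_slope φ φ' hxy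
      (fun z hz ↦ (hφ z (hsub hz)).continuousWithinAt.mono hsub) fun z hz ↦
        (hφ z (hsub (Ioo_subset_Icc_self hz))).hasDerivAt
          (mem_of_superset (Icc_mem_nhds hz.1 hz.2) hsub)
    exact ⟨z, hsub (Ioo_subset_Icc_self hz), by rw [hz', div_mul_cancel₀ _ (sub_ne_zero.2 hxy.ne')]⟩
  have key : ∀ x ∈ A, ∀ y ∈ A, ∃ z ∈ A, |φ x - φ y| = |φ' z| * |x - y| := by
    intro x hx y hy
    rcases lt_trichotomy x y with h | rfl | h
    · obtain ⟨z, hz, e⟩ := mvt x hx y hy h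
      exact ⟨z, hz, by rw [abs_sub_comm, e, abs_mul, abs_sub_comm y x]⟩
    · exact ⟨x, hx, by simp⟩
    · obtain ⟨z, hz, e⟩ := mvt y hy x hx h
      exact ⟨z, hz, by rw [e, abs_mul]⟩
  constructor <;> intro x hx y hy <;> obtain ⟨z, hz, e⟩ := key x hx y hy <;> rw [e]
  · exact mul_le_mul_of_nonneg_right (hlow z hz) (abs_nonneg _)
  · exact mul_le_mul_of_nonneg_right (hupp z hz) (abs_nonneg _)

end BiLipschitzOn

end BiLipschitz

section NonConcentration

variable {μ : Measure ℝ}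

lemma integrable_of_continuousOn_of_ae_mem {E : Type*} [NormedAddCommGroup E] [IsFiniteMeasure μ]
    {A : Set ℝ} (hA : IsCompact A) (hμ : ∀ᵐ x ∂μ, x ∈ A) {u : ℝ → E} (hu : ContinuousOn u A) :
    Integrable u μ := by
  have := hu.integrableOn_compact (μ := μ) hA
  rwa [IntegrableOn, Measure.restrict_eq_self_of_ae_mem hμ] at this

lemma not_ae_eq_const [NeZero μ] [NullSingletonClass μ] (c : ℝ) : ¬ ∀ᵐ x ∂μ, x = c := by
  intro h
  have h_ne : ∀ᵐ x ∂μ, x ≠ c := by simp [ae_iff]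
  obtain ⟨x, hx, hx'⟩ := (h.and h_ne).exists
  exact hx' hx

variable [IsProbabilityMeasure μ]

lemma memLp_id_of_ae_mem (hμ : ∀ᵐ x ∂μ, x ∈ Icc (0 : ℝ) 1) : MemLp id 2 μ :=
  memLp_of_bounded hμ aestronglyMeasurable_id 2

lemma variance_id_pos [NullSingletonClass μ] (hμ : ∀ᵐ x ∂μ, x ∈ Icc (0 : ℝ) 1) :
    0 < Var[id; μ] := by
  refine (variance_nonneg id μ).lt_of_ne' fun h ↦ not_ae_eq_const (μ := μ) μ[id] ?_
  exact ae_eq_integral_of_variance_eq_zero (memLp_id_of_ae_mem hμ) h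

lemma variance_id_le_integral_sub_sq (x : ℝ) : Var[id; μ] ≤ ∫ y, (x - y) ^ 2 ∂μ := by
  rw [← variance_const_sub aestronglyMeasurable_id x]
  exact variance_le_expectation_sq (by fun_prop)

lemma sin_sub_sq_le (a b : ℝ) :
    Real.sin (a - b) ^ 2 ≤ 2 * (Real.sin a ^ 2 + Real.sin b ^ 2) := by
  have hle (u v : ℝ) : (Real.sin u * Real.cos v) ^ 2 ≤ Real.sin u ^ 2 := by
    rw [mul_pow]
    exact mul_le_of_le_one_right (sq_nonneg _) (Real.cos_sq_le_one v)
  rw [Real.sin_sub, mul_comm (Real.cos a)]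
  nlinarith [hle a b, hle b a,
    sq_nonneg (Real.sin a * Real.cos b + Real.sin b * Real.cos a)]

variable {s C : ℝ} {φ w : ℝ → ℝ}

lemma BiLipschitzOn.sq_mul_sub_sq_le (hφ : BiLipschitzOn s 1 φ (Icc 0 1)) (hs : 0 ≤ s) {x y : ℝ}
    (hx : x ∈ Icc (0 : ℝ) 1) (hy : y ∈ Icc (0 : ℝ) 1) :
    (2 * s / Real.pi) ^ 2 * (x - y) ^ 2 ≤ 2 * (Real.sin (φ x) ^ 2 + Real.sin (φ y) ^ 2) := by
  have hsmall : |φ x - φ y| ≤ Real.pi / 2 := by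
    have := hφ.le_mul x hx y hy
    have : |x - y| ≤ 1 := abs_le.2 ⟨by linarith [hx.1, hy.2], by linarith [hx.2, hy.1]⟩
    linarith [Real.pi_gt_three]
  calc (2 * s / Real.pi) ^ 2 * (x - y) ^ 2
    _ = (2 / Real.pi * (s * 1 * |x - y|)) ^ 2 := by rw [← sq_abs (x - y)]; ring
    _ ≤ (2 / Real.pi * |φ x - φ y|) ^ 2 := by
      gcongr
      exact hφ.mul_le x hx y hy
    _ ≤ Real.sin (φ x - φ y) ^ 2 := by
      rw [← sq_abs (Real.sin _)]
      have := Real.pi_pos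
      gcongr
      exact Real.mul_abs_le_abs_sin hsmall
    _ ≤ _ := sin_sub_sq_le _ _

lemma mul_variance_le_integral_sin_sq (hμ : ∀ᵐ x ∂μ, x ∈ Icc (0 : ℝ) 1)
    (hφ : BiLipschitzOn s 1 φ (Icc 0 1)) (hs : 0 ≤ s) :
    (s / Real.pi) ^ 2 * Var[id; μ] ≤ ∫ x, Real.sin (φ x) ^ 2 ∂μ := by
  have hint : Integrable (fun x ↦ Real.sin (φ x) ^ 2) μ :=
    integrable_of_continuousOn_of_ae_mem isCompact_Icc hμ hφ.continuousOn_sin_sq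
  have hint_sq (x : ℝ) : Integrable (fun y ↦ (x - y) ^ 2) μ :=
    integrable_of_continuousOn_of_ae_mem isCompact_Icc hμ (by fun_prop)
  set c := (2 * s / Real.pi) ^ 2 with hc
  set J := ∫ x, Real.sin (φ x) ^ 2 ∂μ
  have inner : ∀ᵐ x ∂μ, c * Var[id; μ] ≤ 2 * (Real.sin (φ x) ^ 2 + J) := by
    filter_upwards [hμ] with x hx
    calc c * Var[id; μ] ≤ c * ∫ y, (x - y) ^ 2 ∂μ := by
          gcongr
          exact variance_id_le_integral_sub_sq x
      _ = ∫ y, c * (x - y) ^ 2 ∂μ := (integral_const_mul _ _).symm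
      _ ≤ ∫ y, 2 * (Real.sin (φ x) ^ 2 + Real.sin (φ y) ^ 2) ∂μ := by
          refine integral_mono_ae ((hint_sq x).const_mul c)
            (((integrable_const _).add hint).const_mul 2) ?_
          filter_upwards [hμ] with y hy using hφ.sq_mul_sub_sq_le hs hx hy
      _ = 2 * (Real.sin (φ x) ^ 2 + J) := by
          rw [integral_const_mul, integral_add (integrable_const _) hint]
          simp [J]
  have outer : c * Var[id; μ] ≤ 2 * (J + J) := calc
    c * Var[id; μ] = ∫ _, c * Var[id; μ] ∂μ := by simp
    _ ≤ ∫ x, 2 * (Real.sin (φ x) ^ 2 + J) ∂μ :=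
      integral_mono_ae (integrable_const _) ((hint.add (integrable_const J)).const_mul 2) inner
    _ = 2 * (J + J) := by
      rw [integral_const_mul, integral_add hint (integrable_const J)]
      simp [J]
  have : c = 4 * (s / Real.pi) ^ 2 := by rw [hc]; ring
  rw [this] at outer
  linarith

lemma LogLipschitzOn.integral_mul_integral_le (hμ : ∀ᵐ x ∂μ, x ∈ Icc (0 : ℝ) 1)
    (hw : LogLipschitzOn C w (Icc 0 1)) (hC : 0 ≤ C) {v : ℝ → ℝ} (hv : ContinuousOn v (Icc 0 1))
    (hv_nonneg : ∀ x ∈ Icc (0 : ℝ) 1, 0 ≤ v x) :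
    (∫ x, v x ∂μ) * ∫ x, w x ∂μ ≤ Real.exp C * ∫ x, v x * w x ∂μ := by
  have hint {u : ℝ → ℝ} (hu : ContinuousOn u (Icc 0 1)) : Integrable u μ :=
    integrable_of_continuousOn_of_ae_mem isCompact_Icc hμ hu
  have h_le : ∀ x ∈ Icc (0 : ℝ) 1, ∫ y, w y ∂μ ≤ Real.exp C * w x := by
    intro x hx
    calc ∫ y, w y ∂μ ≤ ∫ _, Real.exp C * w x ∂μ := by
          refine integral_mono_ae (hint hw.continuousOn) (integrable_const _) ?_
          filter_upwards [hμ] with y hy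
          refine (hw.le_exp_mul y hy x hx).trans ?_
          have := hw.nonneg x hx
          gcongr
          exact mul_le_of_le_one_right hC (Real.dist_le_of_mem_Icc_01 hy hx)
      _ = Real.exp C * w x := by simp
  rw [← integral_mul_const, ← integral_const_mul]
  refine integral_mono_ae ((hint hv).mul_const _)
    ((hint (hv.mul hw.continuousOn)).const_mul _) ?_
  filter_upwards [hμ] with x hx
  rw [mul_left_comm]
  exact mul_le_mul_of_nonneg_left (h_le x hx) (hv_nonneg x hx)

lemma mul_integral_le_integral_sin_sq_mul (hμ : ∀ᵐ x ∂μ, x ∈ Icc (0 : ℝ) 1)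
    (hφ : BiLipschitzOn s 1 φ (Icc 0 1)) (hs : 0 ≤ s) (hw : LogLipschitzOn C w (Icc 0 1))
    (hC : 0 ≤ C) :
    (s / Real.pi) ^ 2 * Var[id; μ] * Real.exp (-C) * ∫ x, w x ∂μ
      ≤ ∫ x, Real.sin (φ x) ^ 2 * w x ∂μ := by
  have hw_nonneg : 0 ≤ ∫ x, w x ∂μ := integral_nonneg_of_ae (hμ.mono hw.nonneg)
  have hsplit := hw.integral_mul_integral_le hμ hC hφ.continuousOn_sin_sq
    fun _ _ ↦ sq_nonneg _
  calc (s / Real.pi) ^ 2 * Var[id; μ] * Real.exp (-C) * ∫ x, w x ∂μ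
    _ = Real.exp (-C) * ((s / Real.pi) ^ 2 * Var[id; μ] * ∫ x, w x ∂μ) := by ring
    _ ≤ Real.exp (-C) * ((∫ x, Real.sin (φ x) ^ 2 ∂μ) * ∫ x, w x ∂μ) := by
      gcongr
      exact mul_variance_le_integral_sin_sq hμ hφ hs
    _ ≤ _ := by
      rw [Real.exp_neg, inv_mul_le_iff₀ (Real.exp_pos C)]
      exact hsplit

end NonConcentration

section SelfSimilar

variable {ι : Type*}

/-- The smallest contraction ratio, in absolute value. -/
noncomputable def minRatio (r : ι → ℝ) : ℝ := ⨅ a, |r a|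

/-- The largest contraction ratio, in absolute value. -/
noncomputable def maxRatio (r : ι → ℝ) : ℝ := ⨆ a, |r a|

lemma minRatio_le [Finite ι] (r : ι → ℝ) (a : ι) : minRatio r ≤ |r a| :=
  ciInf_le (Finite.bddBelow_range fun a ↦ |r a|) a

lemma le_maxRatio [Finite ι] (r : ι → ℝ) (a : ι) : |r a| ≤ maxRatio r :=
  le_ciSup (Finite.bddAbove_range fun a ↦ |r a|) a

variable [Fintype ι]

/-- The probability measure `μ` is self-similar on `[0, 1]` for the contracting similarities
`x ↦ r a * x + c a` with weights `p a`. -/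
structure IsSelfSimilar_s3 (r c p : ι → ℝ) (μ : Measure ℝ) : Prop where
  ratio_ne_zero : ∀ a, r a ≠ 0
  abs_ratio_lt_one : ∀ a, |r a| < 1
  mapsTo : ∀ a, MapsTo (fun x : ℝ ↦ r a * x + c a) (Icc 0 1) (Icc 0 1)
  weight_pos : ∀ a, 0 < p a
  sum_weight : ∑ a, p a = 1
  ae_mem : ∀ᵐ x ∂μ, x ∈ Icc (0 : ℝ) 1
  eq_sum : μ = ∑ a, ENNReal.ofReal (p a) • μ.map (fun x ↦ r a * x + c a)

open Classical in
/-- The contraction ratios of the compositions in which each similarity occurs at most `k` times.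
Their number grows only polynomially in `k`, as composition order does not matter for the ratio. -/
noncomputable def ratioProducts (r : ι → ℝ) (k : ℕ) : Finset ℝ :=
  (Fintype.piFinset fun _ : ι ↦ Finset.range (k + 1)).image fun n ↦ ∏ a, r a ^ n a

lemma mem_ratioProducts {r : ι → ℝ} {k : ℕ} {ρ : ℝ} :
    ρ ∈ ratioProducts r k ↔ ∃ n : ι → ℕ, (∀ a, n a ≤ k) ∧ ∏ a, r a ^ n a = ρ := by
  simp [ratioProducts]

lemma one_mem_ratioProducts (r : ι → ℝ) (k : ℕ) : 1 ∈ ratioProducts r k :=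
  mem_ratioProducts.2 ⟨0, by simp⟩

lemma mul_mem_ratioProducts {r : ι → ℝ} {k : ℕ} {ρ : ℝ} (hρ : ρ ∈ ratioProducts r k) (a : ι) :
    r a * ρ ∈ ratioProducts r (k + 1) := by
  classical
  obtain ⟨n, hn, rfl⟩ := mem_ratioProducts.1 hρ
  refine mem_ratioProducts.2 ⟨fun b ↦ n b + if b = a then 1 else 0, fun b ↦ ?_, ?_⟩
  · have := hn b
    dsimp only
    split_ifs <;> lia
  · have : ∏ b, r b ^ (if b = a then 1 else 0) = r a := by simp [pow_ite]
    simp only [pow_add, Finset.prod_mul_distrib, this, mul_comm]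

lemma card_ratioProducts_le (r : ι → ℝ) (k : ℕ) :
    (ratioProducts r k).card ≤ (k + 1) ^ Fintype.card ι := by
  unfold ratioProducts
  exact Finset.card_image_le.trans (by simp)

/-- `x ↦ ρ * x + t` behaves like a composition of at most `k` similarities whose contraction ratio
is comparable to `δ`. -/
structure IsCylinder (r : ι → ℝ) (δ : ℝ) (k : ℕ) (ρ t : ℝ) : Prop where
  ratio_mem : ρ ∈ ratioProducts r k
  mul_le_abs : minRatio r * δ ≤ |ρ|
  abs_le : |ρ| ≤ δ
  mapsTo : MapsTo (fun x : ℝ ↦ ρ * x + t) (Icc 0 1) (Icc 0 1)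

/-- A finite set containing the contraction ratios of all cylinders of size `δ`. -/
noncomputable def cylinderRatios (r : ι → ℝ) (δ : ℝ) (k : ℕ) : Finset ℝ :=
  {ρ ∈ ratioProducts r k | minRatio r * δ ≤ |ρ|}

lemma card_cylinderRatios_le (r : ι → ℝ) (δ : ℝ) (k : ℕ) :
    (cylinderRatios r δ k).card ≤ (k + 1) ^ Fintype.card ι :=
  (Finset.card_filter_le _ _).trans (card_ratioProducts_le r k)

namespace IsSelfSimilar_s3

variable {r c p : ι → ℝ} {μ : Measure ℝ} {E : Type*} [NormedAddCommGroup E]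

lemma nonempty (S : IsSelfSimilar_s3 r c p μ) : Nonempty ι :=
  Finset.univ_nonempty_iff.1 <| Finset.nonempty_of_sum_ne_zero <| by
    rw [S.sum_weight]
    exact one_ne_zero

lemma minRatio_pos (S : IsSelfSimilar_s3 r c p μ) : 0 < minRatio r := by
  have := S.nonempty
  obtain ⟨a, ha⟩ := exists_eq_ciInf_of_finite (f := fun a ↦ |r a|)
  rw [minRatio, ← ha]
  exact abs_pos.2 (S.ratio_ne_zero a)

lemma maxRatio_lt_one (S : IsSelfSimilar_s3 r c p μ) : maxRatio r < 1 := by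
  have := S.nonempty
  obtain ⟨a, ha⟩ := exists_eq_ciSup_of_finite (f := fun a ↦ |r a|)
  rw [maxRatio, ← ha]
  exact S.abs_ratio_lt_one a

lemma maxRatio_pos (S : IsSelfSimilar_s3 r c p μ) : 0 < maxRatio r := by
  obtain ⟨a⟩ := S.nonempty
  exact (abs_pos.2 (S.ratio_ne_zero a)).trans_le (le_maxRatio r a)

lemma minRatio_lt_one (S : IsSelfSimilar_s3 r c p μ) : minRatio r < 1 := by
  obtain ⟨a⟩ := S.nonempty
  exact (minRatio_le r a).trans_lt (S.abs_ratio_lt_one a)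

lemma translation_mem (S : IsSelfSimilar_s3 r c p μ) (a : ι) : c a ∈ Icc (0 : ℝ) 1 := by
  simpa using S.mapsTo a (left_mem_Icc.2 zero_le_one)

lemma measurableEmbedding (S : IsSelfSimilar_s3 r c p μ) (a : ι) :
    MeasurableEmbedding fun x ↦ r a * x + c a :=
  (affineHomeomorph (r a) (c a) (S.ratio_ne_zero a)).measurableEmbedding

lemma integrable_comp (S : IsSelfSimilar_s3 r c p μ) {u : ℝ → E} (hu : Integrable u μ) (a : ι) :
    Integrable (fun x ↦ u (r a * x + c a)) μ := by
  rw [S.eq_sum, integrable_finsetSum_measure] at hu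
  have := hu a (Finset.mem_univ a)
  rw [integrable_smul_measure (by simpa using S.weight_pos a) ENNReal.ofReal_ne_top] at this
  exact (S.measurableEmbedding a).integrable_map_iff.1 this

variable [NormedSpace ℝ E]

lemma integral_eq_sum (S : IsSelfSimilar_s3 r c p μ) {u : ℝ → E} (hu : Integrable u μ) :
    ∫ x, u x ∂μ = ∑ a, p a • ∫ x, u (r a * x + c a) ∂μ := by
  have hu' := hu
  rw [S.eq_sum, integrable_finsetSum_measure] at hu'
  conv_lhs => rw [S.eq_sum, integral_finsetSum_measure hu']
  refine Finset.sum_congr rfl fun a _ ↦ ?_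
  rw [integral_smul_measure, (S.measurableEmbedding a).integral_map,
    ENNReal.toReal_ofReal (S.weight_pos a).le]

lemma norm_integral_le_of_cylinders (S : IsSelfSimilar_s3 r c p μ) {δ : ℝ} {k : ℕ}
    (hk : maxRatio r ^ k ≤ δ) (hδ : minRatio r * δ ≤ 1) {u : ℝ → E} {A : ℝ → ℝ}
    (hu : Integrable u μ) (hA : Integrable A μ)
    (h : ∀ ρ t, IsCylinder r δ k ρ t →
      ‖∫ x, u (ρ * x + t) ∂μ‖ ≤ ∫ x, A (ρ * x + t) ∂μ) :
    ‖∫ x, u x ∂μ‖ ≤ ∫ x, A x ∂μ := by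
  have whole {k : ℕ} {δ : ℝ} (h1 : 1 ≤ δ) (hδ : minRatio r * δ ≤ 1) : IsCylinder r δ k 1 0 :=
    ⟨one_mem_ratioProducts r k, by simpa using hδ, by simpa using h1, by simp [MapsTo]⟩
  induction k generalizing δ u A with
  | zero => simpa using h 1 0 (whole (by simpa using hk) hδ)
  | succ k ih =>
    rcases le_total 1 δ with h1 | h1
    · simpa using h 1 0 (whole h1 hδ)
    have child (a : ι) :
        ‖∫ x, u (r a * x + c a) ∂μ‖ ≤ ∫ x, A (r a * x + c a) ∂μ := by
      have hra : 0 < |r a| := abs_pos.2 (S.ratio_ne_zero a)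
      refine ih (δ := δ / |r a|) ?_ ?_ (S.integrable_comp hu a) (S.integrable_comp hA a) ?_
      · rw [le_div_iff₀ hra]
        refine le_trans ?_ hk
        rw [pow_succ]
        have := S.maxRatio_pos
        gcongr
        exact le_maxRatio r a
      · have : 0 ≤ δ := (pow_nonneg S.maxRatio_pos.le _).trans hk
        rw [← mul_div_assoc, div_le_one hra]
        exact (mul_le_of_le_one_right S.minRatio_pos.le h1).trans (minRatio_le r a)
      · intro ρ t hC
        have := h (r a * ρ) (r a * t + c a)
          ⟨mul_mem_ratioProducts hC.ratio_mem a,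
            by simpa [abs_mul, div_le_iff₀' hra, ← mul_div_assoc] using hC.mul_le_abs,
            by simpa [abs_mul, le_div_iff₀' hra] using hC.abs_le,
            fun x hx ↦ by simpa [mul_add, mul_assoc, add_assoc] using S.mapsTo a (hC.mapsTo hx)⟩
        simpa only [mul_add, mul_assoc, add_assoc] using this
    rw [S.integral_eq_sum hu, S.integral_eq_sum hA]
    refine norm_sum_le_of_le _ fun a _ ↦ ?_
    rw [norm_smul, Real.norm_of_nonneg (S.weight_pos a).le, smul_eq_mul]
    exact mul_le_mul_of_nonneg_left (child a) (S.weight_pos a).le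

end IsSelfSimilar_s3

end SelfSimilar

section Decay

variable {ι : Type*} [Fintype ι]

/-- The bound on `|μ̂ η|` obtained from `N` self-similarity expansions: on each level the term of
index `a` gains the weight `p a` and a cancellation factor `damping (β a * η)`. -/
noncomputable def majorant (r p β : ι → ℝ) : ℕ → ℝ → ℝ
  | 0, _ => 1
  | N + 1, η => ∑ a, p a * (damping (β a * η) * majorant r p β N (r a * η))

lemma continuous_majorant {r p β : ι → ℝ} (N : ℕ) : Continuous (majorant r p β N) := by
  induction N with
  | zero => exact continuous_const
  | succ N ih =>
    exact continuous_finsetSum _ fun a _ ↦ continuous_const.mul <|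
      (continuous_damping.comp (continuous_const_mul _)).mul (ih.comp (continuous_const_mul _))

lemma sum_mul_le_of_le_of_le {p z : ι → ℝ} (hp : ∀ a, 0 ≤ p a) (hp_sum : ∑ a, p a = 1) {b κ : ℝ}
    (hz : ∀ a, z a ≤ b) {a₀ : ι} (hz₀ : z a₀ ≤ (1 - κ) * b) :
    ∑ a, p a * z a ≤ (1 - p a₀ * κ) * b := by
  have hsum : ∑ a, p a * (b - z a) = b - ∑ a, p a * z a := by
    simp only [mul_sub, Finset.sum_sub_distrib, ← Finset.sum_mul, hp_sum, one_mul]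
  have hsingle : p a₀ * (b - z a₀) ≤ ∑ a, p a * (b - z a) :=
    Finset.single_le_sum (fun a _ ↦ mul_nonneg (hp a) (sub_nonneg.2 (hz a))) (Finset.mem_univ a₀)
  linarith [mul_le_mul_of_nonneg_left hz₀ (hp a₀)]

lemma charFun_eq_integral_circleExp (μ : Measure ℝ) (η : ℝ) :
    charFun μ η = ∫ x, (Circle.exp (η * x) : ℂ) ∂μ := by
  simp [charFun_apply_real, Circle.coe_exp]

namespace IsSelfSimilar_s3

variable {r c p : ι → ℝ} {μ : Measure ℝ}

lemma integrable_of_continuousOn (S : IsSelfSimilar_s3 r c p μ) [IsFiniteMeasure μ] {E : Type*}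
    [NormedAddCommGroup E] {u : ℝ → E} (hu : ContinuousOn u (Icc 0 1)) : Integrable u μ :=
  integrable_of_continuousOn_of_ae_mem isCompact_Icc S.ae_mem hu

lemma majorant_nonneg (S : IsSelfSimilar_s3 r c p μ) {β : ι → ℝ} (N : ℕ) (η : ℝ) :
    0 ≤ majorant r p β N η := by
  induction N generalizing η with
  | zero => exact zero_le_one
  | succ N ih =>
    exact Finset.sum_nonneg fun a _ ↦
      mul_nonneg (S.weight_pos a).le (mul_nonneg (damping_nonneg _) (ih _))

lemma logLipschitzOn_majorant (S : IsSelfSimilar_s3 r c p μ) {β : ι → ℝ} (hβ : ∀ a, |β a| ≤ 1)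
    (N : ℕ) : LogLipschitzOn (1 - maxRatio r)⁻¹ (majorant r p β N) univ := by
  have hgap : 0 < 1 - maxRatio r := sub_pos.2 S.maxRatio_lt_one
  set K := (1 - maxRatio r)⁻¹
  have hK : 1 + K * maxRatio r = K := by
    rw [← sub_eq_zero]
    linear_combination -(inv_mul_cancel₀ hgap.ne')
  induction N with
  | zero => exact (LogLipschitzOn.const zero_le_one).weaken (by positivity)
  | succ N ih =>
    have hlin (b : ℝ) : ∀ x ∈ univ, ∀ y ∈ univ, dist (b * x) (b * y) ≤ |b| * dist x y :=
      fun x _ y _ ↦ by rw [Real.dist_eq, Real.dist_eq, ← mul_sub, abs_mul]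
    refine LogLipschitzOn.sum fun a _ ↦
      ((LogLipschitzOn.const (S.weight_pos a).le).mul
        ((logLipschitzOn_damping.comp zero_le_one (mapsTo_univ _ _) (hlin (β a))).mul
          (ih.comp (by positivity) (mapsTo_univ _ _) (hlin (r a))))).weaken ?_
    calc 0 + (1 * |β a| + K * |r a|) ≤ 0 + (1 * 1 + K * maxRatio r) := by
          gcongr
          exacts [hβ a, le_maxRatio r a]
      _ = K := by linarith

variable [IsProbabilityMeasure μ]

lemma exists_mul_integral_le_integral_sin_sq_mul [NullSingletonClass μ]
    (S : IsSelfSimilar_s3 r c p μ) {s C : ℝ} (hs : 0 < s) (hC : 0 ≤ C) :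
    ∃ κ, 0 < κ ∧ κ ≤ 1 ∧ ∀ (φ w : ℝ → ℝ) (M : ℝ), BiLipschitzOn s M φ (Icc 0 1) → 1 ≤ M →
      LogLipschitzOn (C * M) w (Icc 0 1) →
      κ * ∫ x, w x ∂μ ≤ ∫ x, Real.sin (φ x) ^ 2 * w x ∂μ := by
  have hlo := S.minRatio_pos
  set κ₀ := (s * minRatio r / Real.pi) ^ 2 * Var[id; μ] * Real.exp (-C)
  have hκ₀ : 0 < κ₀ := by
    have := variance_id_pos S.ae_mem
    positivity
  refine ⟨min κ₀ 1, by positivity, min_le_right _ _, fun φ w M hφ hM hw ↦ ?_⟩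
  have hM0 : 0 < M := by linarith
  obtain ⟨k, hk⟩ := exists_pow_lt_of_lt_one (inv_pos.2 hM0) S.maxRatio_lt_one
  have hint_w : Integrable w μ := S.integrable_of_continuousOn hw.continuousOn
  have hint_sin : Integrable (fun x ↦ Real.sin (φ x) ^ 2 * w x) μ :=
    S.integrable_of_continuousOn (hφ.continuousOn_sin_sq.mul hw.continuousOn)
  rw [← integral_const_mul]
  refine (le_abs_self _).trans <| S.norm_integral_le_of_cylinders hk.le ?_ (hint_w.const_mul _)
    hint_sin fun ρ t hcyl ↦ ?_
  · exact mul_le_one₀ S.minRatio_lt_one.le (inv_pos.2 hM0).le (inv_le_one_of_one_le₀ hM)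
  have hρM : |ρ| * M ≤ 1 := by
    rw [← le_div_iff₀ hM0, one_div]
    exact hcyl.abs_le
  have hφT : BiLipschitzOn (s * minRatio r) 1 (fun x ↦ φ (ρ * x + t)) (Icc 0 1) := by
    refine (hφ.comp_affine hcyl.mapsTo).of_scale_mem hρM ?_
    rw [mul_one]
    gcongr
    exact (div_le_iff₀ hM0).1 hcyl.mul_le_abs
  have hwT : LogLipschitzOn C (fun x ↦ w (ρ * x + t)) (Icc 0 1) := by
    refine (hw.comp (M := |ρ|) (by positivity) hcyl.mapsTo fun x _ y _ ↦ ?_).weaken ?_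
    · simp [Real.dist_eq, ← mul_sub, abs_mul]
    · rw [mul_assoc, mul_comm M]
      exact mul_le_of_le_one_right hC hρM
  have hwT_nonneg : 0 ≤ ∫ x, w (ρ * x + t) ∂μ := integral_nonneg_of_ae (S.ae_mem.mono hwT.nonneg)
  rw [integral_const_mul, Real.norm_of_nonneg (by positivity)]
  exact (mul_le_mul_of_nonneg_right (min_le_left _ _) hwT_nonneg).trans
    (mul_integral_le_integral_sin_sq_mul S.ae_mem hφT (by positivity) hwT hC)

lemma exists_integral_damping_mul_le [NullSingletonClass μ] (S : IsSelfSimilar_s3 r c p μ) {s C : ℝ}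
    (hs : 0 < s) (hC : 0 ≤ C) :
    ∃ κ, 0 < κ ∧ κ ≤ 1 ∧ ∀ (φ w : ℝ → ℝ) (M : ℝ), BiLipschitzOn s M φ (Icc 0 1) → 1 ≤ M →
      LogLipschitzOn (C * M) w (Icc 0 1) →
      ∫ x, damping (φ x) * w x ∂μ ≤ (1 - κ) * ∫ x, w x ∂μ := by
  obtain ⟨κ, hκ, hκ1, hgap⟩ := S.exists_mul_integral_le_integral_sin_sq_mul hs hC
  refine ⟨κ / 2, by positivity, by linarith, fun φ w M hφ hM hw ↦ ?_⟩
  have hint_sin : Integrable (fun x ↦ Real.sin (φ x) ^ 2 * w x) μ :=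
    S.integrable_of_continuousOn (hφ.continuousOn_sin_sq.mul hw.continuousOn)
  have hsplit : ∫ x, damping (φ x) * w x ∂μ =
      ∫ x, w x ∂μ - (∫ x, Real.sin (φ x) ^ 2 * w x ∂μ) / 2 := by
    rw [← integral_div, ← integral_sub (S.integrable_of_continuousOn hw.continuousOn)
      (hint_sin.div_const 2)]
    congr with x
    unfold damping
    ring
  linarith [hgap φ w M hφ hM hw]

lemma charFun_eq_sum (S : IsSelfSimilar_s3 r c p μ) (η : ℝ) :
    charFun μ η = ∑ a, p a • (Circle.exp (c a * η) * charFun μ (r a * η)) := by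
  have hint : Integrable (fun x ↦ (Circle.exp (η * x) : ℂ)) μ :=
    S.integrable_of_continuousOn (continuous_circleExp.comp (continuous_const_mul η)).continuousOn
  rw [charFun_eq_integral_circleExp, S.integral_eq_sum hint]
  refine Finset.sum_congr rfl fun a _ ↦ ?_
  rw [charFun_eq_integral_circleExp, ← integral_const_mul]
  congr with x
  rw [← Circle.coe_mul, ← Circle.exp_add]
  ring_nf

lemma norm_charFun_le_majorant (S : IsSelfSimilar_s3 r c p μ) {σ : Equiv.Perm ι}
    (hr : ∀ a, r (σ a) = r a) (hp : ∀ a, p (σ a) = p a) (N : ℕ) (η : ℝ) :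
    ‖charFun μ η‖ ≤ majorant r p (fun a ↦ (c a - c (σ a)) / 2) N η := by
  induction N generalizing η with
  | zero => exact norm_charFun_le_one η
  | succ N ih =>
    have hpair : (2 : ℝ) • charFun μ η = ∑ a, p a •
        ((Circle.exp (c a * η) + Circle.exp (c (σ a) * η)) * charFun μ (r a * η)) := by
      rw [two_smul]
      nth_rw 2 [S.charFun_eq_sum]
      rw [← Equiv.sum_comp σ, S.charFun_eq_sum, ← Finset.sum_add_distrib]
      simp only [hr, hp, add_mul, smul_add]
    have hterm (a : ι) :
        ‖p a • ((Circle.exp (c a * η) + Circle.exp (c (σ a) * η)) * charFun μ (r a * η))‖ ≤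
          2 * (p a * (damping ((c a - c (σ a)) / 2 * η) *
            majorant r p (fun a ↦ (c a - c (σ a)) / 2) N (r a * η))) := by
      have hphase := norm_circleExp_add_le (c a * η) (c (σ a) * η)
      rw [← sub_mul, mul_div_right_comm] at hphase
      rw [norm_smul, norm_mul, Real.norm_of_nonneg (S.weight_pos a).le]
      have := S.weight_pos a
      calc _ ≤ p a * (2 * damping ((c a - c (σ a)) / 2 * η) *
            majorant r p (fun a ↦ (c a - c (σ a)) / 2) N (r a * η)) := by
            gcongr
            · exact mul_nonneg zero_le_two (damping_nonneg _)
            · exact ih _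
        _ = _ := by ring
    have h := norm_sum_le_of_le Finset.univ fun a _ ↦ hterm a
    rw [← hpair, norm_smul, Real.norm_ofNat, ← Finset.mul_sum] at h
    exact le_of_mul_le_mul_left h two_pos

lemma integral_majorant_succ_le (S : IsSelfSimilar_s3 r c p μ) {β : ι → ℝ} {N : ℕ} {G : ℝ → ℝ}
    {a₀ : ι} {b κ : ℝ} (hG : ContinuousOn G (Icc 0 1))
    (hb : ∀ a, ∫ x, majorant r p β N (r a * G x) ∂μ ≤ b)
    (hκ : ∫ x, damping (β a₀ * G x) * majorant r p β N (r a₀ * G x) ∂μ ≤ (1 - κ) * b) :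
    ∫ x, majorant r p β (N + 1) (G x) ∂μ ≤ (1 - p a₀ * κ) * b := by
  have hcont (a : ι) : ContinuousOn (fun x ↦ majorant r p β N (r a * G x)) (Icc 0 1) :=
    (continuous_majorant N).comp_continuousOn (continuousOn_const.mul hG)
  have hint (a : ι) :
      Integrable (fun x ↦ damping (β a * G x) * majorant r p β N (r a * G x)) μ :=
    S.integrable_of_continuousOn <|
      (continuous_damping.comp_continuousOn (continuousOn_const.mul hG)).mul (hcont a)
  have hterm (a : ι) : ∫ x, damping (β a * G x) * majorant r p β N (r a * G x) ∂μ ≤ b := by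
    refine (integral_mono (hint a) (S.integrable_of_continuousOn (hcont a)) fun x ↦ ?_).trans (hb a)
    exact mul_le_of_le_one_left (S.majorant_nonneg N _) (damping_le_one _)
  calc ∫ x, majorant r p β (N + 1) (G x) ∂μ
    _ = ∑ a, p a * ∫ x, damping (β a * G x) * majorant r p β N (r a * G x) ∂μ := by
      simp only [majorant, ← integral_const_mul]
      exact integral_finsetSum _ fun a _ ↦ (hint a).const_mul _
    _ ≤ _ := sum_mul_le_of_le_of_le (fun a ↦ (S.weight_pos a).le) S.sum_weight hterm hκ

lemma exists_integral_majorant_le_pow [NullSingletonClass μ] (S : IsSelfSimilar_s3 r c p μ)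
    {β : ι → ℝ} (hβ : ∀ a, |β a| ≤ 1) {a₀ : ι} (hβ₀ : β a₀ ≠ 0) {s : ℝ} (hs : 0 < s) :
    ∃ θ, 0 ≤ θ ∧ θ < 1 ∧ ∀ (N : ℕ) (G : ℝ → ℝ) (M : ℝ), 0 ≤ M → BiLipschitzOn s M G (Icc 0 1) →
      1 ≤ minRatio r ^ N * (|β a₀| * M) → ∫ x, majorant r p β N (G x) ∂μ ≤ θ ^ N := by
  have hlo := S.minRatio_pos
  set K := (1 - maxRatio r)⁻¹
  have hK : 0 < K := inv_pos.2 (sub_pos.2 S.maxRatio_lt_one)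
  obtain ⟨κ, hκ, hκ1, hgap⟩ := S.exists_integral_damping_mul_le hs (C := K / |β a₀|) (by positivity)
  have hp1 : p a₀ ≤ 1 := S.sum_weight ▸
    Finset.single_le_sum (fun a _ ↦ (S.weight_pos a).le) (Finset.mem_univ a₀)
  have hpκ : p a₀ * κ ≤ 1 := mul_le_one₀ hp1 hκ.le hκ1
  have hpκ_pos : 0 < p a₀ * κ := mul_pos (S.weight_pos a₀) hκ
  refine ⟨1 - p a₀ * κ, by linarith, by linarith, fun N ↦ ?_⟩
  induction N with
  | zero => simp [majorant]
  | succ N ih =>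
    intro G M hM0 hG hM
    have hchild (a : ι) : ∫ x, majorant r p β N (r a * G x) ∂μ ≤ (1 - p a₀ * κ) ^ N := by
      refine ih _ _ (by positivity) (hG.const_mul (r a)) (hM.trans ?_)
      calc minRatio r ^ (N + 1) * (|β a₀| * M)
        _ = minRatio r ^ N * (|β a₀| * (minRatio r * M)) := by ring
        _ ≤ minRatio r ^ N * (|β a₀| * (|r a| * M)) := by
          gcongr
          exact minRatio_le r a
    rw [pow_succ']
    refine S.integral_majorant_succ_le hG.continuousOn hchild ?_
    have hscale : 1 ≤ |β a₀| * M := hM.trans <|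
      mul_le_of_le_one_left (by positivity) (pow_le_one₀ hlo.le S.minRatio_lt_one.le)
    refine (hgap _ _ _ (hG.const_mul (β a₀)) hscale ?_).trans
      (mul_le_mul_of_nonneg_left (hchild a₀) (by linarith))
    have hKM : K / |β a₀| * (|β a₀| * M) = K * M := by field_simp
    rw [hKM]
    refine (S.logLipschitzOn_majorant hβ N).comp hK.le (mapsTo_univ _ _) fun x hx y hy ↦ ?_
    refine ((hG.const_mul (r a₀)).le_mul x hx y hy).trans ?_
    rw [Real.dist_eq]
    gcongr
    exact mul_le_of_le_one_left hM0 (S.abs_ratio_lt_one a₀).le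

end IsSelfSimilar_s3

end Decay

section Oscillation

lemma abs_sub_sub_mul_le_of_lipschitz_deriv {A : Set ℝ} (hA : Convex ℝ A) {f g : ℝ → ℝ} {L : ℝ}
    (hf : ∀ x ∈ A, HasDerivWithinAt f (g x) A x)
    (hg : ∀ x ∈ A, ∀ y ∈ A, |g x - g y| ≤ L * |x - y|) {t x : ℝ} (ht : t ∈ A) (hx : x ∈ A) :
    |f x - f t - g t * (x - t)| ≤ L * (x - t) ^ 2 := by
  have hsub : uIcc t x ⊆ A := by
    rw [← segment_eq_uIcc]
    exact hA.segment_subset ht hx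
  have hderiv : ∀ z ∈ uIcc t x, HasDerivWithinAt (fun z ↦ f z - g t * z) (g z - g t) (uIcc t x) z :=
    fun z hz ↦ by
      simpa using ((hf z (hsub hz)).mono hsub).fun_sub ((hasDerivWithinAt_id z _).const_mul (g t))
  have hL : 0 ≤ L * |x - t| := (abs_nonneg _).trans (hg x hx t ht)
  have hbound : ∀ z ∈ uIcc t x, ‖g z - g t‖ ≤ L * |x - t| := by
    intro z hz
    have hz' : |z - t| ≤ |x - t| := abs_sub_left_of_mem_uIcc hz
    rcases (abs_nonneg (x - t)).eq_or_lt with h0 | h0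
    · rw [← h0, abs_nonpos_iff, sub_eq_zero] at hz'
      rwa [hz', sub_self, norm_zero]
    · exact (hg z (hsub hz) t ht).trans
        (mul_le_mul_of_nonneg_left hz' (nonneg_of_mul_nonneg_left hL h0))
  have h := (convex_uIcc t x).norm_image_sub_le_of_norm_hasDerivWithin_le hderiv hbound
    left_mem_uIcc right_mem_uIcc
  calc |f x - f t - g t * (x - t)| = ‖f x - g t * x - (f t - g t * t)‖ := by
        rw [Real.norm_eq_abs]
        ring_nf
    _ ≤ L * |x - t| * |x - t| := h
    _ = L * (x - t) ^ 2 := by rw [mul_assoc, abs_mul_abs_self, sq]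

variable {μ : Measure ℝ} [IsProbabilityMeasure μ]

lemma norm_integral_circleExp_sub_le (hμ : ∀ᵐ x ∂μ, x ∈ Icc (0 : ℝ) 1) {φ ψ : ℝ → ℝ} {η : ℝ}
    (hφ : ContinuousOn φ (Icc 0 1)) (hψ : ContinuousOn ψ (Icc 0 1))
    (h : ∀ x ∈ Icc (0 : ℝ) 1, |φ x - ψ x| ≤ η) :
    ‖∫ x, (Circle.exp (φ x) : ℂ) ∂μ - ∫ x, (Circle.exp (ψ x) : ℂ) ∂μ‖ ≤ η := by
  have hint {χ : ℝ → ℝ} (hχ : ContinuousOn χ (Icc 0 1)) :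
      Integrable (fun x ↦ (Circle.exp (χ x) : ℂ)) μ :=
    integrable_of_continuousOn_of_ae_mem isCompact_Icc hμ
      (continuous_circleExp.comp_continuousOn hχ)
  rw [← integral_sub (hint hφ) (hint hψ)]
  refine (norm_integral_le_of_norm_le_const (hμ.mono fun x hx ↦
    (norm_circleExp_sub_le _ _).trans (h x hx))).trans ?_
  simp

lemma norm_integral_circleExp_comp_affine_le (hμ : ∀ᵐ x ∂μ, x ∈ Icc (0 : ℝ) 1)
    {f g : ℝ → ℝ} {L ρ t : ℝ} (hT : MapsTo (fun x ↦ ρ * x + t) (Icc 0 1) (Icc 0 1))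
    (hf : ∀ x ∈ Icc (0 : ℝ) 1, HasDerivWithinAt f (g x) (Icc 0 1) x)
    (hg : ∀ x ∈ Icc (0 : ℝ) 1, ∀ y ∈ Icc (0 : ℝ) 1, |g x - g y| ≤ L * |x - y|) (ξ : ℝ) :
    ‖∫ x, (Circle.exp (ξ * f (ρ * x + t)) : ℂ) ∂μ‖ ≤
      L * (|ξ| * ρ ^ 2) + ‖charFun μ (ξ * ρ * g t)‖ := by
  have ht : t ∈ Icc (0 : ℝ) 1 := by simpa using hT (left_mem_Icc.2 zero_le_one)
  have hL : 0 ≤ L := nonneg_of_abs_sub_le hg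
  have hfT : ContinuousOn (fun x ↦ f (ρ * x + t)) (Icc 0 1) :=
    ContinuousOn.comp (fun x hx ↦ (hf x hx).continuousWithinAt) (by fun_prop) hT
  have hlin : ‖∫ x, (Circle.exp (ξ * f t + ξ * ρ * g t * x) : ℂ) ∂μ‖ =
      ‖charFun μ (ξ * ρ * g t)‖ := by
    simp only [Circle.exp_add, Circle.coe_mul]
    rw [integral_const_mul, norm_mul, Circle.norm_coe, one_mul, charFun_eq_integral_circleExp]
  have hphase : ∀ x ∈ Icc (0 : ℝ) 1,
      |ξ * f (ρ * x + t) - (ξ * f t + ξ * ρ * g t * x)| ≤ L * (|ξ| * ρ ^ 2) := by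
    intro x hx
    calc |ξ * f (ρ * x + t) - (ξ * f t + ξ * ρ * g t * x)|
      _ = |ξ| * |f (ρ * x + t) - f t - g t * (ρ * x + t - t)| := by
        rw [← abs_mul]
        ring_nf
      _ ≤ |ξ| * (L * (ρ * x + t - t) ^ 2) := by
        gcongr
        exact abs_sub_sub_mul_le_of_lipschitz_deriv (convex_Icc 0 1) hf hg ht (hT hx)
      _ = L * (|ξ| * ρ ^ 2) * x ^ 2 := by ring
      _ ≤ L * (|ξ| * ρ ^ 2) :=
        mul_le_of_le_one_right (by positivity) (pow_le_one₀ hx.1 hx.2)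
  have hdiff := norm_integral_circleExp_sub_le hμ (φ := fun x ↦ ξ * f (ρ * x + t))
    (ψ := fun x ↦ ξ * f t + ξ * ρ * g t * x) (continuousOn_const.mul hfT) (by fun_prop) hphase
  rw [← hlin]
  exact (norm_le_norm_sub_add _ _).trans (add_le_add_left hdiff _)

lemma tendsto_affine_pow_mul_pow {θ : ℝ} (hθ : 0 ≤ θ) (hθ1 : θ < 1) (j m n : ℕ) :
    Tendsto (fun N : ℕ ↦ ((j * N + m : ℕ) : ℝ) ^ n * θ ^ N) atTop (𝓝 0) := by
  have hpow := (tendsto_pow_const_mul_const_pow_of_abs_lt_one n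
    (abs_lt.2 ⟨by linarith, hθ1⟩)).const_mul (((j + m : ℕ) : ℝ) ^ n)
  rw [mul_zero] at hpow
  refine tendsto_of_tendsto_of_tendsto_of_le_of_le' tendsto_const_nhds hpow
    (Eventually.of_forall fun N ↦ by positivity) ?_
  filter_upwards [eventually_ge_atTop 1] with N hN
  have hle : j * N + m ≤ (j + m) * N := by nlinarith
  rw [← mul_assoc, ← mul_pow]
  gcongr
  exact_mod_cast hle

/- `N` and `k` are both of order `log δ⁻¹`, so the exponential gain beats the polynomial loss. -/
lemma eventually_exists_scales {lo hi θ C τ : ℝ} (hlo : 0 < lo) (hlo1 : lo < 1) (hhi : 0 < hi)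
    (hhi1 : hi < 1) (hθ : 0 ≤ θ) (hθ1 : θ < 1) (hC : 0 < C) (hτ : 0 < τ) (n : ℕ) :
    ∀ᶠ δ in 𝓝[>] (0 : ℝ), ∃ N k : ℕ,
      hi ^ k ≤ δ ∧ C * δ ≤ lo ^ N ∧ ((k + 1 : ℕ) : ℝ) ^ n * θ ^ N ≤ τ := by
  obtain ⟨j, hj⟩ := exists_pow_lt_of_lt_one hlo hhi1
  obtain ⟨k₀, hk₀⟩ := exists_pow_lt_of_lt_one (inv_pos.2 hC) hhi1
  obtain ⟨N₀, hN₀⟩ := eventually_atTop.1 <|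
    (tendsto_affine_pow_mul_pow hθ hθ1 j (k₀ + j + 1) n).eventually_le_const hτ
  have hsmall : ∀ᶠ δ in 𝓝[>] (0 : ℝ), C * δ ≤ lo ^ N₀ := by
    have : Tendsto (fun δ ↦ C * δ) (𝓝[>] 0) (𝓝 0) := by
      simpa using (tendsto_id.const_mul C).mono_left (nhdsWithin_le_nhds (a := (0 : ℝ)))
    exact this.eventually_le_const (by positivity)
  filter_upwards [hsmall, self_mem_nhdsWithin] with δ hδ hδ0
  have hδ0 : 0 < δ := hδ0
  obtain ⟨N, hN, hN'⟩ := exists_nat_pow_near_of_lt_one (mul_pos hC hδ0)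
    (hδ.trans (pow_le_one₀ hlo.le hlo1.le)) hlo hlo1
  have hN₀N : N₀ ≤ N := by
    by_contra! h
    exact absurd (hN.trans_le hδ) (not_lt.2 (pow_le_pow_of_le_one hlo.le hlo1.le h))
  refine ⟨N, k₀ + j * (N + 1), ?_, hN', ?_⟩
  · calc hi ^ (k₀ + j * (N + 1)) = hi ^ k₀ * (hi ^ j) ^ (N + 1) := by rw [pow_add, pow_mul]
      _ ≤ C⁻¹ * lo ^ (N + 1) := by gcongr
      _ ≤ C⁻¹ * (C * δ) := by gcongr
      _ = δ := inv_mul_cancel_left₀ hC.ne' δ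
  · have : k₀ + j * (N + 1) + 1 = j * N + (k₀ + j + 1) := by ring
    rw [this]
    exact hN₀ N hN₀N

end Oscillation

section NonlinearDecay

lemma tendsto_sqrt_div_abs_cocompact {e : ℝ} (he : 0 < e) :
    Tendsto (fun ξ : ℝ ↦ √(e / |ξ|)) (cocompact ℝ) (𝓝[>] 0) := by
  have hnorm := tendsto_norm_cocompact_atTop (E := ℝ)
  refine tendsto_nhdsWithin_iff.2 ⟨?_, ?_⟩
  · simpa using (hnorm.const_div_atTop e).sqrt
  · filter_upwards [hnorm.eventually_gt_atTop 0] with ξ hξ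
    exact Real.sqrt_pos.2 (div_pos he hξ)

namespace IsSelfSimilar_s3

variable {ι : Type*} [Fintype ι] {r c p β : ι → ℝ} {μ : Measure ℝ} [IsProbabilityMeasure μ]

lemma norm_integral_circleExp_comp_affine_le_integral_majorant (S : IsSelfSimilar_s3 r c p μ)
    (hβ : ∀ a, |β a| ≤ 1) {N : ℕ} (hmaj : ∀ η, ‖charFun μ η‖ ≤ majorant r p β N η)
    {f g : ℝ → ℝ} {L ρ t : ℝ}
    (hT : MapsTo (fun x ↦ ρ * x + t) (Icc 0 1) (Icc 0 1))
    (hf : ∀ x ∈ Icc (0 : ℝ) 1, HasDerivWithinAt f (g x) (Icc 0 1) x)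
    (hg : ∀ x ∈ Icc (0 : ℝ) 1, ∀ y ∈ Icc (0 : ℝ) 1, |g x - g y| ≤ L * |x - y|) (ξ : ℝ) :
    ‖∫ x, (Circle.exp (ξ * f (ρ * x + t)) : ℂ) ∂μ‖ ≤
      ∫ x, (L * (|ξ| * ρ ^ 2) + Real.exp ((1 - maxRatio r)⁻¹ * (L * (|ξ| * ρ ^ 2))) *
        majorant r p β N (ξ * ρ * g (ρ * x + t))) ∂μ := by
  have hK : 0 < (1 - maxRatio r)⁻¹ := inv_pos.2 (sub_pos.2 S.maxRatio_lt_one)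
  have ht : t ∈ Icc (0 : ℝ) 1 := by simpa using hT (left_mem_Icc.2 zero_le_one)
  have hgT : ContinuousOn (fun x ↦ g (ρ * x + t)) (Icc 0 1) :=
    (continuousOn_of_abs_sub_le hg).comp (by fun_prop) hT
  have hL : 0 ≤ L := nonneg_of_abs_sub_le hg
  set e := L * (|ξ| * ρ ^ 2)
  have hfreq : ∀ x ∈ Icc (0 : ℝ) 1, |ξ * ρ * g t - ξ * ρ * g (ρ * x + t)| ≤ e := by
    intro x hx
    rw [← mul_sub, abs_mul, abs_mul]
    calc |ξ| * |ρ| * |g t - g (ρ * x + t)| ≤ |ξ| * |ρ| * (L * |t - (ρ * x + t)|) := by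
          gcongr
          exact hg t ht _ (hT hx)
      _ = |ξ| * |ρ| ^ 2 * L * |x| := by
          rw [sub_add_cancel_right, abs_neg, abs_mul]
          ring
      _ = e * |x| := by rw [sq_abs]; ring
      _ ≤ e := mul_le_of_le_one_right (by positivity) (abs_le.2 ⟨by linarith [hx.1], hx.2⟩)
  have hmajT : ∀ x ∈ Icc (0 : ℝ) 1, ‖charFun μ (ξ * ρ * g t)‖ ≤
      Real.exp ((1 - maxRatio r)⁻¹ * e) * majorant r p β N (ξ * ρ * g (ρ * x + t)) := by
    intro x hx
    refine (hmaj _).trans <| ((S.logLipschitzOn_majorant hβ N).le_exp_mul _ (mem_univ _)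
      (ξ * ρ * g (ρ * x + t)) (mem_univ _)).trans ?_
    have := S.majorant_nonneg (β := β) N (ξ * ρ * g (ρ * x + t))
    gcongr
    exact hfreq x hx
  have hconst : ‖∫ x, (Circle.exp (ξ * f (ρ * x + t)) : ℂ) ∂μ‖ ≤
      ∫ _, (e + ‖charFun μ (ξ * ρ * g t)‖) ∂μ := by
    simpa using norm_integral_circleExp_comp_affine_le S.ae_mem hT hf hg ξ
  refine hconst.trans <| integral_mono_ae (integrable_const _) (S.integrable_of_continuousOn ?_) ?_
  · exact continuousOn_const.add <| continuousOn_const.mul <|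
      (continuous_majorant N).comp_continuousOn (continuousOn_const.mul hgT)
  · filter_upwards [S.ae_mem] with x hx using by gcongr; exact hmajT x hx

lemma norm_integral_circleExp_le_integral_majorant (S : IsSelfSimilar_s3 r c p μ)
    (hβ : ∀ a, |β a| ≤ 1) {N : ℕ} (hmaj : ∀ η, ‖charFun μ η‖ ≤ majorant r p β N η)
    {δ : ℝ} {k : ℕ} (hk : maxRatio r ^ k ≤ δ) (hδ : minRatio r * δ ≤ 1) {f g : ℝ → ℝ} {L : ℝ}
    (hf : ∀ x ∈ Icc (0 : ℝ) 1, HasDerivWithinAt f (g x) (Icc 0 1) x)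
    (hg : ∀ x ∈ Icc (0 : ℝ) 1, ∀ y ∈ Icc (0 : ℝ) 1, |g x - g y| ≤ L * |x - y|) (ξ : ℝ) :
    ‖∫ x, (Circle.exp (ξ * f x) : ℂ) ∂μ‖ ≤
      L * (|ξ| * δ ^ 2) + Real.exp ((1 - maxRatio r)⁻¹ * (L * (|ξ| * δ ^ 2))) *
        ∑ ρ ∈ cylinderRatios r δ k, ∫ x, majorant r p β N (ξ * ρ * g x) ∂μ := by
  have hK : 0 < (1 - maxRatio r)⁻¹ := inv_pos.2 (sub_pos.2 S.maxRatio_lt_one)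
  have hL : 0 ≤ L := nonneg_of_abs_sub_le hg
  have hf_cont : ContinuousOn f (Icc 0 1) := fun x hx ↦ (hf x hx).continuousWithinAt
  have hcont (ρ : ℝ) : ContinuousOn (fun x ↦ majorant r p β N (ξ * ρ * g x)) (Icc 0 1) :=
    (continuous_majorant N).comp_continuousOn
      (continuousOn_const.mul (continuousOn_of_abs_sub_le hg))
  set e := L * (|ξ| * δ ^ 2)
  set A : ℝ → ℝ := fun x ↦ e + Real.exp ((1 - maxRatio r)⁻¹ * e) *
    ∑ ρ ∈ cylinderRatios r δ k, majorant r p β N (ξ * ρ * g x)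
  have hA_cont : ContinuousOn A (Icc 0 1) :=
    continuousOn_const.add (continuousOn_const.mul (continuousOn_finsetSum _ fun ρ _ ↦ hcont ρ))
  have hint_sum : Integrable (fun x ↦ Real.exp ((1 - maxRatio r)⁻¹ * e) *
      ∑ ρ ∈ cylinderRatios r δ k, majorant r p β N (ξ * ρ * g x)) μ :=
    S.integrable_of_continuousOn <|
      continuousOn_const.mul (continuousOn_finsetSum _ fun ρ _ ↦ hcont ρ)
  have hA_integral : ∫ x, A x ∂μ = e + Real.exp ((1 - maxRatio r)⁻¹ * e) *
      ∑ ρ ∈ cylinderRatios r δ k, ∫ x, majorant r p β N (ξ * ρ * g x) ∂μ := by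
    rw [integral_add (integrable_const _) hint_sum, integral_const, integral_const_mul,
      integral_finsetSum _ fun ρ _ ↦ S.integrable_of_continuousOn (hcont ρ)]
    simp
  rw [← hA_integral]
  refine S.norm_integral_le_of_cylinders hk hδ (S.integrable_of_continuousOn
    (continuous_circleExp.comp_continuousOn (continuousOn_const.mul hf_cont)))
    (S.integrable_of_continuousOn hA_cont) fun ρ t hcyl ↦ ?_
  have hρ : ρ ∈ cylinderRatios r δ k := by simp [cylinderRatios, hcyl.ratio_mem, hcyl.mul_le_abs]
  have he : L * (|ξ| * ρ ^ 2) ≤ e := by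
    have : ρ ^ 2 ≤ δ ^ 2 := sq_le_sq.2 (hcyl.abs_le.trans (le_abs_self δ))
    dsimp only [e]
    gcongr
  have hT : ContinuousOn (fun x ↦ ρ * x + t) (Icc 0 1) := by fun_prop
  refine (S.norm_integral_circleExp_comp_affine_le_integral_majorant hβ hmaj hcyl.mapsTo hf hg
    ξ).trans <| integral_mono (S.integrable_of_continuousOn ?_)
      (S.integrable_of_continuousOn (hA_cont.comp hT hcyl.mapsTo)) fun x ↦ ?_
  · exact continuousOn_const.add (continuousOn_const.mul ((hcont ρ).comp hT hcyl.mapsTo))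
  · dsimp only [A]
    gcongr
    · exact S.majorant_nonneg N _
    · exact Finset.single_le_sum (f := fun ρ ↦ majorant r p β N (ξ * ρ * g (_ * x + t)))
        (fun _ _ ↦ S.majorant_nonneg N _) hρ

lemma exists_norm_integral_circleExp_le [NullSingletonClass μ] (S : IsSelfSimilar_s3 r c p μ)
    (hβ : ∀ a, |β a| ≤ 1) {a₀ : ι} (hβ₀ : β a₀ ≠ 0)
    (hmaj : ∀ N η, ‖charFun μ η‖ ≤ majorant r p β N η) {s : ℝ} (hs : 0 < s) :
    ∃ θ, 0 ≤ θ ∧ θ < 1 ∧ ∀ (N k : ℕ) (δ L ξ : ℝ) (f g : ℝ → ℝ),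
      0 ≤ δ → δ ≤ 1 → maxRatio r ^ k ≤ δ →
      1 ≤ minRatio r ^ N * (|β a₀| * (|ξ| * (minRatio r * δ) * L)) →
      (∀ x ∈ Icc (0 : ℝ) 1, HasDerivWithinAt f (g x) (Icc 0 1) x) →
      BiLipschitzOn s L g (Icc 0 1) →
      ‖∫ x, (Circle.exp (ξ * f x) : ℂ) ∂μ‖ ≤
        L * (|ξ| * δ ^ 2) + Real.exp ((1 - maxRatio r)⁻¹ * (L * (|ξ| * δ ^ 2))) *
          (((k + 1 : ℕ) : ℝ) ^ Fintype.card ι * θ ^ N) := by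
  obtain ⟨θ, hθ, hθ1, hdecay⟩ := S.exists_integral_majorant_le_pow hβ hβ₀ hs
  refine ⟨θ, hθ, hθ1, fun N k δ L ξ f g hδ hδ1 hk hN hf hg ↦ ?_⟩
  have hL : 0 ≤ L := nonneg_of_abs_sub_le hg.le_mul
  have hlo := S.minRatio_pos
  have hterm : ∀ ρ ∈ cylinderRatios r δ k, ∫ x, majorant r p β N (ξ * ρ * g x) ∂μ ≤ θ ^ N := by
    intro ρ hρ
    have hρ : minRatio r * δ ≤ |ρ| := (Finset.mem_filter.1 hρ).2
    refine hdecay N _ _ (by positivity) (hg.const_mul (ξ * ρ)) (hN.trans ?_)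
    rw [abs_mul]
    gcongr
  have hcard : ((cylinderRatios r δ k).card : ℝ) ≤ ((k + 1 : ℕ) : ℝ) ^ Fintype.card ι := by
    exact_mod_cast card_cylinderRatios_le r δ k
  refine (S.norm_integral_circleExp_le_integral_majorant hβ (hmaj N) hk
    (mul_le_one₀ S.minRatio_lt_one.le hδ hδ1) hf hg.le_mul ξ).trans ?_
  gcongr
  refine (Finset.sum_le_card_nsmul _ _ _ hterm).trans ?_
  rw [nsmul_eq_mul]
  gcongr

lemma eventually_norm_integral_circleExp_le [NullSingletonClass μ] (S : IsSelfSimilar_s3 r c p μ)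
    (hβ : ∀ a, |β a| ≤ 1) {a₀ : ι} (hβ₀ : β a₀ ≠ 0)
    (hmaj : ∀ N η, ‖charFun μ η‖ ≤ majorant r p β N η) {s L ε : ℝ} (hs : 0 < s) (hL : 0 < L)
    (hε : 0 < ε) :
    ∀ᶠ ξ in cocompact ℝ, ∀ f g : ℝ → ℝ,
      (∀ x ∈ Icc (0 : ℝ) 1, HasDerivWithinAt f (g x) (Icc 0 1) x) →
      BiLipschitzOn s L g (Icc 0 1) → ‖∫ x, (Circle.exp (ξ * f x) : ℂ) ∂μ‖ ≤ ε := by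
  have hlo := S.minRatio_pos
  obtain ⟨θ, hθ, hθ1, hbound⟩ := S.exists_norm_integral_circleExp_le hβ hβ₀ hmaj hs
  set E := Real.exp ((1 - maxRatio r)⁻¹ * (ε / 2))
  set e := ε / 2 / L
  have he : 0 < e := by positivity
  set C := (|β a₀| * (minRatio r * e * L))⁻¹
  have hC : 0 < C := by positivity
  have hδ_lim := tendsto_sqrt_div_abs_cocompact he
  filter_upwards [hδ_lim.eventually (eventually_exists_scales hlo S.minRatio_lt_one S.maxRatio_pos
      S.maxRatio_lt_one hθ hθ1 hC (τ := ε / 2 * E⁻¹) (by positivity) (Fintype.card ι)),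
      hδ_lim.eventually (Ioc_mem_nhdsGT zero_lt_one)]
    with ξ ⟨N, k, hk, hN, hτ⟩ hδ f g hf hg
  set δ := √(e / |ξ|)
  have hξ : |ξ| ≠ 0 := by
    intro h
    simp [δ, h] at hδ
  have hξδ : |ξ| * δ ^ 2 = e := by
    rw [Real.sq_sqrt (by positivity), mul_div_cancel₀ _ hξ]
  have hLe : L * e = ε / 2 := mul_div_cancel₀ _ hL.ne'
  have hscale : 1 ≤ minRatio r ^ N * (|β a₀| * (|ξ| * (minRatio r * δ) * L)) := by
    have := hδ.1.le
    calc 1 = C * (|β a₀| * (minRatio r * e * L)) := (inv_mul_cancel₀ (by positivity)).symm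
      _ = C * δ * (|β a₀| * (|ξ| * (minRatio r * δ) * L)) := by
        rw [← hξδ]
        ring
      _ ≤ _ := by gcongr
  have h := hbound N k δ L ξ f g hδ.1.le hδ.2 hk hscale hf hg
  rw [hξδ, hLe] at h
  calc ‖∫ x, (Circle.exp (ξ * f x) : ℂ) ∂μ‖
    _ ≤ ε / 2 + E * (ε / 2 * E⁻¹) := h.trans (by gcongr)
    _ = ε := by
      rw [mul_left_comm, mul_inv_cancel₀ (Real.exp_ne_zero _)]
      ring

end IsSelfSimilar_s3

end NonlinearDecay

section Localization

variable {μ : Measure ℝ}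

lemma tendsto_integral_div_add_abs [IsFiniteMeasure μ] {h : ℝ → ℝ} (hh : AEStronglyMeasurable h μ)
    (hne : ∀ᵐ x ∂μ, h x ≠ 0) :
    Tendsto (fun σ ↦ ∫ x, σ / (σ + |h x|) ∂μ) (𝓝[>] 0) (𝓝 0) := by
  suffices Tendsto (fun σ ↦ ∫ x, σ / (σ + |h x|) ∂μ) (𝓝[>] 0) (𝓝 (∫ _, (0 : ℝ) ∂μ)) by
    rwa [integral_zero] at this
  refine tendsto_integral_filter_of_dominated_convergence (fun _ ↦ 1)
    (Eventually.of_forall fun σ ↦ ?_) ?_ (integrable_const 1) ?_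
  · exact ((hh.aemeasurable.norm.const_add σ).const_div σ).aestronglyMeasurable
  · filter_upwards [self_mem_nhdsWithin] with σ (hσ : 0 < σ)
    refine Eventually.of_forall fun x ↦ ?_
    rw [Real.norm_of_nonneg (by positivity)]
    exact div_le_one_of_le₀ (le_add_of_nonneg_right (abs_nonneg _)) (by positivity)
  · filter_upwards [hne] with x hx
    have hcont : ContinuousAt (fun σ ↦ σ / (σ + |h x|)) 0 :=
      continuousAt_id.div (by fun_prop) (by simpa using hx)
    simpa using hcont.tendsto.mono_left nhdsWithin_le_nhds

lemma hasDerivWithinAt_comp_affine {φ : ℝ → ℝ} {φ' ρ t x : ℝ} {A B : Set ℝ}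
    (hT : MapsTo (fun x ↦ ρ * x + t) B A) (hφ : HasDerivWithinAt φ φ' A (ρ * x + t)) :
    HasDerivWithinAt (fun x ↦ φ (ρ * x + t)) (ρ * φ') B x := by
  have hlin : HasDerivWithinAt (fun x ↦ ρ * x + t) ρ B x := by
    simpa using ((hasDerivWithinAt_id x B).const_mul ρ).add_const t
  rw [mul_comm]
  exact hφ.comp x hlin hT

lemma exists_forall_abs_sub_le_of_continuousOn {h : ℝ → ℝ} (hh : ContinuousOn h (Icc 0 1)) {τ : ℝ}
    (hτ : 0 < τ) :
    ∃ δ, 0 < δ ∧ δ ≤ 1 ∧ ∀ x ∈ Icc (0 : ℝ) 1, ∀ y ∈ Icc (0 : ℝ) 1,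
      |x - y| ≤ δ → |h x - h y| ≤ τ := by
  obtain ⟨δ, hδ, hδ'⟩ := Metric.uniformContinuousOn_iff_le.1
    (isCompact_Icc.uniformContinuousOn_of_continuous hh) τ hτ
  exact ⟨min δ 1, by positivity, min_le_right _ _, fun x hx y hy hxy ↦
    hδ' x hx y hy (hxy.trans (min_le_left _ _))⟩

namespace IsSelfSimilar_s3

variable {ι : Type*} [Fintype ι] {r c p β : ι → ℝ} [IsProbabilityMeasure μ]

lemma eventually_norm_integral_circleExp_comp_affine_le [NullSingletonClass μ]
    (S : IsSelfSimilar_s3 r c p μ) (hβ : ∀ a, |β a| ≤ 1) {a₀ : ι} (hβ₀ : β a₀ ≠ 0)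
    (hmaj : ∀ N η, ‖charFun μ η‖ ≤ majorant r p β N η) {f g h : ℝ → ℝ} {H τ δ ε : ℝ}
    (hf : ∀ x ∈ Icc (0 : ℝ) 1, HasDerivWithinAt f (g x) (Icc 0 1) x)
    (hg : ∀ x ∈ Icc (0 : ℝ) 1, HasDerivWithinAt g (h x) (Icc 0 1) x)
    (hH : ∀ x ∈ Icc (0 : ℝ) 1, |h x| ≤ H) (hH0 : 0 < H) (hτ : 0 < τ) (hδ : 0 < δ) (hε : 0 < ε) :
    ∀ᶠ ξ in cocompact ℝ, ∀ ρ t, minRatio r * δ ≤ |ρ| → |ρ| ≤ δ →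
      MapsTo (fun x ↦ ρ * x + t) (Icc 0 1) (Icc 0 1) →
      (∀ x ∈ Icc (0 : ℝ) 1, τ ≤ |h (ρ * x + t)|) →
      ‖∫ x, (Circle.exp (ξ * f (ρ * x + t)) : ℂ) ∂μ‖ ≤ ε := by
  have hlo := S.minRatio_pos
  filter_upwards [S.eventually_norm_integral_circleExp_le hβ hβ₀ hmaj
    (s := minRatio r ^ 2 * τ / H) (L := δ ^ 2 * H) (by positivity) (by positivity) hε]
    with ξ hξ ρ t hρ_ge hρ_le hT hlow
  refine hξ (fun x ↦ f (ρ * x + t)) (fun x ↦ ρ * g (ρ * x + t))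
    (fun x hx ↦ hasDerivWithinAt_comp_affine hT (hf _ (hT hx)))
    (.of_hasDerivWithinAt (φ' := fun x ↦ ρ * (ρ * h (ρ * x + t))) (convex_Icc 0 1)
      (fun x hx ↦ (hasDerivWithinAt_comp_affine hT (hg _ (hT hx))).const_mul ρ) ?_ ?_)
  · intro x hx
    calc minRatio r ^ 2 * τ / H * (δ ^ 2 * H) = (minRatio r * δ) * ((minRatio r * δ) * τ) := by
          field_simp
      _ ≤ |ρ| * (|ρ| * |h (ρ * x + t)|) := by
          gcongr
          exact hlow x hx
      _ = _ := by rw [abs_mul, abs_mul]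
  · intro x hx
    calc |ρ * (ρ * h (ρ * x + t))| = |ρ| * (|ρ| * |h (ρ * x + t)|) := by rw [abs_mul, abs_mul]
      _ ≤ δ * (δ * H) := by
          gcongr
          exact hH _ (hT hx)
      _ = δ ^ 2 * H := by ring

/- The cylinders on which `|h| > τ` somewhere have `|h| ≥ τ / 2` everywhere, hence a small
oscillatory integral; on the others the weight `2 * τ / (τ + |h|)` is at least `1`. -/
lemma eventually_norm_integral_circleExp_le_integral [NullSingletonClass μ]
    (S : IsSelfSimilar_s3 r c p μ) (hβ : ∀ a, |β a| ≤ 1) {a₀ : ι} (hβ₀ : β a₀ ≠ 0)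
    (hmaj : ∀ N η, ‖charFun μ η‖ ≤ majorant r p β N η) {f g h : ℝ → ℝ} {τ ε : ℝ}
    (hf : ∀ x ∈ Icc (0 : ℝ) 1, HasDerivWithinAt f (g x) (Icc 0 1) x)
    (hg : ∀ x ∈ Icc (0 : ℝ) 1, HasDerivWithinAt g (h x) (Icc 0 1) x)
    (hh : ContinuousOn h (Icc 0 1)) (hτ : 0 < τ) (hε : 0 < ε) :
    ∀ᶠ ξ in cocompact ℝ, ‖∫ x, (Circle.exp (ξ * f x) : ℂ) ∂μ‖ ≤
      ∫ x, (ε + 2 * (τ / (τ + |h x|))) ∂μ := by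
  obtain ⟨H, hH0, hH⟩ := (isCompact_Icc.image_of_continuousOn hh).isBounded.exists_pos_norm_le
  rw [forall_mem_image] at hH
  obtain ⟨δ, hδ, hδ1, hosc⟩ := exists_forall_abs_sub_le_of_continuousOn hh (half_pos hτ)
  obtain ⟨k, hk⟩ := exists_pow_lt_of_lt_one hδ S.maxRatio_lt_one
  have hf_cont : ContinuousOn f (Icc 0 1) := fun x hx ↦ (hf x hx).continuousWithinAt
  have hA_cont : ContinuousOn (fun x ↦ ε + 2 * (τ / (τ + |h x|))) (Icc 0 1) :=
    continuousOn_const.add <| continuousOn_const.mul <|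
      continuousOn_const.div (continuousOn_const.add hh.abs) fun x _ ↦ by positivity
  filter_upwards [S.eventually_norm_integral_circleExp_comp_affine_le hβ hβ₀ hmaj hf hg hH hH0
    (half_pos hτ) hδ hε] with ξ hξ
  refine S.norm_integral_le_of_cylinders hk.le (mul_le_one₀ S.minRatio_lt_one.le hδ.le hδ1)
    (S.integrable_of_continuousOn
      (continuous_circleExp.comp_continuousOn (continuousOn_const.mul hf_cont)))
    (S.integrable_of_continuousOn hA_cont) fun ρ t hcyl ↦ ?_
  have hbound {b : ℝ} (hb : ∀ x ∈ Icc (0 : ℝ) 1, b ≤ ε + 2 * (τ / (τ + |h (ρ * x + t)|))) :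
      b ≤ ∫ x, (ε + 2 * (τ / (τ + |h (ρ * x + t)|))) ∂μ := by
    have := integral_mono_ae (integrable_const b) (S.integrable_of_continuousOn
      (hA_cont.comp (by fun_prop) hcyl.mapsTo)) (S.ae_mem.mono hb)
    simpa using this
  by_cases hlarge : ∃ y ∈ Icc (0 : ℝ) 1, τ < |h (ρ * y + t)|
  · obtain ⟨y, hy, hτy⟩ := hlarge
    refine (hξ ρ t hcyl.mul_le_abs hcyl.abs_le hcyl.mapsTo fun x hx ↦ ?_).trans
      (hbound fun x _ ↦ le_add_of_nonneg_right (by positivity))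
    have hyx : |ρ * y + t - (ρ * x + t)| ≤ δ := by
      rw [add_sub_add_right_eq_sub, ← mul_sub, abs_mul]
      exact (mul_le_of_le_one_right (abs_nonneg _) (Real.dist_le_of_mem_Icc_01 hy hx)).trans
        hcyl.abs_le
    linarith [hosc _ (hcyl.mapsTo hy) _ (hcyl.mapsTo hx) hyx,
      abs_sub_abs_le_abs_sub (h (ρ * y + t)) (h (ρ * x + t))]
  · push Not at hlarge
    have hnorm : ‖∫ x, (Circle.exp (ξ * f (ρ * x + t)) : ℂ) ∂μ‖ ≤ 1 := by
      simpa using norm_integral_le_of_norm_le_const (μ := μ) (C := 1)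
        (Eventually.of_forall fun x ↦ (Circle.norm_coe (Circle.exp (ξ * f (ρ * x + t)))).le)
    refine hnorm.trans (hbound fun x hx ↦ ?_)
    have : 1 / 2 ≤ τ / (τ + |h (ρ * x + t)|) := by
      rw [div_le_div_iff₀ two_pos (by positivity)]
      linarith [hlarge x hx]
    linarith

lemma tendsto_integral_circleExp_of_majorant [NullSingletonClass μ] (S : IsSelfSimilar_s3 r c p μ)
    (hβ : ∀ a, |β a| ≤ 1) {a₀ : ι} (hβ₀ : β a₀ ≠ 0)
    (hmaj : ∀ N η, ‖charFun μ η‖ ≤ majorant r p β N η) {f g h : ℝ → ℝ}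
    (hf : ∀ x ∈ Icc (0 : ℝ) 1, HasDerivWithinAt f (g x) (Icc 0 1) x)
    (hg : ∀ x ∈ Icc (0 : ℝ) 1, HasDerivWithinAt g (h x) (Icc 0 1) x)
    (hh : ContinuousOn h (Icc 0 1)) (hne : ∀ᵐ x ∂μ, h x ≠ 0) :
    Tendsto (fun ξ ↦ ∫ x, (Circle.exp (ξ * f x) : ℂ) ∂μ) (cocompact ℝ) (𝓝 0) := by
  refine NormedAddGroup.tendsto_nhds_zero.2 fun ε hε ↦ ?_
  have hlim := tendsto_integral_div_add_abs
    (S.integrable_of_continuousOn hh).aestronglyMeasurable hne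
  obtain ⟨τ, hτ_le, hτ : 0 < τ⟩ := ((hlim.eventually_le_const (u := ε / 8) (by positivity)).and
    self_mem_nhdsWithin).exists
  have hint : Integrable (fun x ↦ τ / (τ + |h x|)) μ :=
    S.integrable_of_continuousOn <|
      continuousOn_const.div (continuousOn_const.add hh.abs) fun x _ ↦ by positivity
  filter_upwards [S.eventually_norm_integral_circleExp_le_integral hβ hβ₀ hmaj hf hg hh hτ
    (half_pos hε)] with ξ hξ
  rw [integral_add (integrable_const _) (hint.const_mul 2), integral_const, integral_const_mul,
    probReal_univ, one_smul] at hξ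
  linarith

end IsSelfSimilar_s3

end Localization

section Rajchman

namespace IsSelfSimilar_s3

variable {ι : Type*} [Fintype ι] {r c p : ι → ℝ} {μ : Measure ℝ}

lemma prod_self (S : IsSelfSimilar_s3 r c p μ) :
    IsSelfSimilar_s3 (fun x : ι × ι ↦ r x.1 * r x.2) (fun x ↦ r x.1 * c x.2 + c x.1)
      (fun x ↦ p x.1 * p x.2) μ where
  ratio_ne_zero x := mul_ne_zero (S.ratio_ne_zero _) (S.ratio_ne_zero _)
  abs_ratio_lt_one x := by
    rw [abs_mul]
    exact mul_lt_one_of_nonneg_of_lt_one_left (abs_nonneg _) (S.abs_ratio_lt_one _)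
      (S.abs_ratio_lt_one _).le
  mapsTo x y hy := by
    simpa [mul_add, mul_assoc, add_assoc] using S.mapsTo x.1 (S.mapsTo x.2 hy)
  weight_pos x := mul_pos (S.weight_pos _) (S.weight_pos _)
  sum_weight := by simp [Fintype.sum_prod_type, ← Finset.mul_sum, S.sum_weight]
  ae_mem := S.ae_mem
  eq_sum := by
    have hmap (a : ι) : μ.map (fun x ↦ r a * x + c a) = ∑ b, ENNReal.ofReal (p b) •
        μ.map (fun x ↦ r a * r b * x + (r a * c b + c a)) := by
      conv_lhs => rw [S.eq_sum]
      rw [Measure.map_finset_sum' (S.measurableEmbedding a).measurable.aemeasurable]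
      refine Finset.sum_congr rfl fun b _ ↦ ?_
      rw [Measure.map_smul, Measure.map_map (S.measurableEmbedding a).measurable
        (S.measurableEmbedding b).measurable]
      congr 2 with x
      simp only [Function.comp_apply]
      ring
    rw [Fintype.sum_prod_type]
    conv_lhs => rw [S.eq_sum]
    refine Finset.sum_congr rfl fun a _ ↦ ?_
    simp only [hmap a, Finset.smul_sum, smul_smul, ENNReal.ofReal_mul (S.weight_pos a).le]

variable [IsProbabilityMeasure μ] [NullSingletonClass μ]

lemma exists_apply_ne_self (S : IsSelfSimilar_s3 r c p μ) (x₀ : ℝ) : ∃ a, r a * x₀ + c a ≠ x₀ := by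
  by_contra! hfix
  have hint : Integrable (fun x ↦ |x - x₀|) μ := S.integrable_of_continuousOn (by fun_prop)
  have hbranch (a : ι) : ∫ x, |r a * x + c a - x₀| ∂μ ≤ maxRatio r * ∫ x, |x - x₀| ∂μ := by
    have hdist (x : ℝ) : |r a * x + c a - x₀| = |r a| * |x - x₀| := by
      rw [← abs_mul]
      congr 1
      linarith [hfix a]
    simp only [hdist, integral_const_mul]
    gcongr
    exact le_maxRatio r a
  have hcontract : ∫ x, |x - x₀| ∂μ ≤ maxRatio r * ∫ x, |x - x₀| ∂μ := calc
    ∫ x, |x - x₀| ∂μ = ∑ a, p a * ∫ x, |r a * x + c a - x₀| ∂μ := S.integral_eq_sum hint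
    _ ≤ ∑ a, p a * (maxRatio r * ∫ x, |x - x₀| ∂μ) :=
      Finset.sum_le_sum fun a _ ↦ mul_le_mul_of_nonneg_left (hbranch a) (S.weight_pos a).le
    _ = maxRatio r * ∫ x, |x - x₀| ∂μ := by rw [← Finset.sum_mul, S.sum_weight, one_mul]
  have hzero : ∫ x, |x - x₀| ∂μ = 0 := by
    have : 0 ≤ ∫ x, |x - x₀| ∂μ := integral_nonneg fun _ ↦ abs_nonneg _
    nlinarith [S.maxRatio_lt_one]
  rw [integral_eq_zero_iff_of_nonneg (fun _ ↦ abs_nonneg _) hint] at hzero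
  refine not_ae_eq_const (μ := μ) x₀ (hzero.mono fun x hx ↦ ?_)
  exact sub_eq_zero.1 (abs_eq_zero.1 hx)

lemma exists_comp_ne_comp (S : IsSelfSimilar_s3 r c p μ) :
    ∃ a b, r a * c b + c a ≠ r b * c a + c b := by
  obtain ⟨a⟩ := S.nonempty
  obtain ⟨b, hb⟩ := S.exists_apply_ne_self (c a / (1 - r a))
  have ha : 1 - r a ≠ 0 := (sub_pos.2 ((le_abs_self _).trans_lt (S.abs_ratio_lt_one a))).ne'
  refine ⟨a, b, fun h ↦ hb ?_⟩
  field_simp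
  linarith

lemma tendsto_integral_circleExp (S : IsSelfSimilar_s3 r c p μ) {f g h : ℝ → ℝ}
    (hf : ∀ x ∈ Icc (0 : ℝ) 1, HasDerivWithinAt f (g x) (Icc 0 1) x)
    (hg : ∀ x ∈ Icc (0 : ℝ) 1, HasDerivWithinAt g (h x) (Icc 0 1) x)
    (hh : ContinuousOn h (Icc 0 1)) (hne : ∀ᵐ x ∂μ, h x ≠ 0) :
    Tendsto (fun ξ ↦ ∫ x, (Circle.exp (ξ * f x) : ℂ) ∂μ) (cocompact ℝ) (𝓝 0) := by
  obtain ⟨a, b, hab⟩ := S.exists_comp_ne_comp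
  refine S.prod_self.tendsto_integral_circleExp_of_majorant (a₀ := (a, b)) (fun x ↦ ?_) ?_
    (S.prod_self.norm_charFun_le_majorant (σ := Equiv.prodComm ι ι)
      (fun _ ↦ mul_comm _ _) (fun _ ↦ mul_comm _ _)) hf hg hh hne
  · have h₁ := S.prod_self.translation_mem x
    have h₂ := S.prod_self.translation_mem (Equiv.prodComm ι ι x)
    exact abs_le.2 ⟨by linarith [h₁.1, h₂.2], by linarith [h₁.2, h₂.1]⟩
  · exact div_ne_zero (sub_ne_zero.2 hab) two_ne_zero

end IsSelfSimilar_s3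

lemma ft_map {μ : Measure ℝ} {f : ℝ → ℝ} (hf : AEMeasurable f μ) (ξ : ℝ) :
    ft (μ.map f) ξ = ∫ x, (Circle.exp (2 * Real.pi * ξ * f x) : ℂ) ∂μ := by
  rw [ft, integral_map hf (by fun_prop)]
  simp only [Circle.coe_exp]

lemma rajchman_map_of_tendsto {μ : Measure ℝ} {f : ℝ → ℝ} (hf : AEMeasurable f μ)
    (h : Tendsto (fun ξ ↦ ∫ x, (Circle.exp (ξ * f x) : ℂ) ∂μ) (cocompact ℝ) (𝓝 0)) :
    Rajchman (μ.map f) := by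
  have hscale : Tendsto (fun ξ ↦ 2 * Real.pi * ξ) (cocompact ℝ) (cocompact ℝ) :=
    (Homeomorph.mulLeft₀ (2 * Real.pi) Real.two_pi_pos.ne').isClosedEmbedding.tendsto_cocompact
  exact (h.comp hscale).congr fun ξ ↦ (ft_map hf ξ).symm

lemma hasDerivWithinAt_iteratedDerivWithin {f : ℝ → ℝ} {A : Set ℝ} {n k : ℕ}
    (hf : ContDiffOn ℝ n f A) (hk : k < n) (hA : UniqueDiffOn ℝ A) {x : ℝ} (hx : x ∈ A) :
    HasDerivWithinAt (iteratedDerivWithin k f A) (iteratedDerivWithin (k + 1) f A x) A x := by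
  rw [iteratedDerivWithin_succ]
  exact (hf.differentiableOn_iteratedDerivWithin (mod_cast hk) hA x hx).hasDerivWithinAt

end Rajchman

/-- If `μ` is a self-similar measure on `[0,1]`, `f : [0,1] → ℝ` is `C²`, and
`μ({x ∈ [0,1] : f''(x) = 0}) = 0`, then the pushforward `f_*μ` is Rajchman. -/
theorem stmt3 (m : ℕ) (hm : 0 < m) (r c p : Fin m → ℝ)
    (hr : ∀ a, 0 < |r a| ∧ |r a| < 1)
    (hmaps : ∀ a, MapsTo (fun x : ℝ => r a * x + c a) (Set.Icc 0 1) (Set.Icc 0 1))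
    (hp : ∀ a, 0 < p a) (hpsum : ∑ a, p a = 1)
    (μ : Measure ℝ) (hprob : IsProbabilityMeasure μ) (hna : ∀ x : ℝ, μ {x} = 0)
    (hsupp : μ (Set.Icc (0 : ℝ) 1) = 1)
    (hinv : μ = ∑ a, ENNReal.ofReal (p a) • Measure.map (fun x : ℝ => r a * x + c a) μ)
    (f : ℝ → ℝ) (hf : ContDiffOn ℝ 2 f (Set.Icc 0 1))
    (hZ : μ {x ∈ Set.Icc (0 : ℝ) 1 | iteratedDerivWithin 2 f (Set.Icc 0 1) x = 0} = 0) :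
    Rajchman (Measure.map f μ) := by
  have : NullSingletonClass μ := ⟨hna⟩
  have hmem : ∀ᵐ x ∂μ, x ∈ Icc (0 : ℝ) 1 := (mem_ae_iff_prob_eq_one measurableSet_Icc).2 hsupp
  have S : IsSelfSimilar_s3 r c p μ :=
    ⟨fun a ↦ abs_pos.1 (hr a).1, fun a ↦ (hr a).2, hmaps, hp, hpsum, hmem, hinv⟩
  have hI : UniqueDiffOn ℝ (Icc (0 : ℝ) 1) := uniqueDiffOn_Icc_zero_one
  have hne : ∀ᵐ x ∂μ, iteratedDerivWithin 2 f (Icc 0 1) x ≠ 0 := by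
    filter_upwards [hmem, measure_eq_zero_iff_ae_notMem.1 hZ] with x hx hxZ h0 using hxZ ⟨hx, h0⟩
  refine rajchman_map_of_tendsto (S.integrable_of_continuousOn hf.continuousOn).aemeasurable <|
    S.tendsto_integral_circleExp (g := iteratedDerivWithin 1 f (Icc 0 1)) (fun x hx ↦ ?_)
      (fun x hx ↦ hasDerivWithinAt_iteratedDerivWithin hf one_lt_two hI hx)
      (hf.continuousOn_iteratedDerivWithin le_rfl hI) hne
  simpa using hasDerivWithinAt_iteratedDerivWithin (k := 0) hf two_pos hI hx
end
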